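/- arXiv:1305.1664 — 8 statements merged into one kernel-verified Lean document; each statement's English description precedes it below -/
import Mathlib

section
/- Let m ≥ 1 and let f₁, f₂ : Sᵐ → S¹ be continuous maps into the circle that are homotopic to each other. Then the homotopy coincidence space E(f₁,f₂) has infinitely many path components. -/
/-- The unit sphere `Sᵏ ⊆ ℝ^{k+1}`; in particular `Sph 1` is the unit circle. -/
abbrev Sph (k : ℕ) : Type :=
  Metric.sphere (0 : EuclideanSpace ℝ (Fin (k + 1))) 1

/-- The homotopy coincidence space `E(f₁,f₂)`. -/
abbrev HCS {X Y : Type} [TopologicalSpace X] [TopologicalSpace Y]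
    (f₁ f₂ : C(X, Y)) : Type :=
  {p : X × C(unitInterval, Y) // p.2 0 = f₁ p.1 ∧ p.2 1 = f₂ p.1}

/-- The standard identification of `Sph 1` with the unit circle in `ℂ`. -/
noncomputable def sphHomeo : Sph 1 ≃ₜ Circle where
  toFun v := ⟨Complex.orthonormalBasisOneI.repr.symm v.1, by
    have h := v.2
    rw [mem_sphere_zero_iff_norm] at h
    change _ ∈ Metric.sphere (0 : ℂ) 1
    rw [mem_sphere_zero_iff_norm, LinearIsometryEquiv.norm_map]
    exact h⟩
  invFun z := ⟨Complex.orthonormalBasisOneI.repr (z : ℂ), by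
    rw [mem_sphere_zero_iff_norm, LinearIsometryEquiv.norm_map]
    exact Circle.norm_coe z⟩
  left_inv v := Subtype.ext (Complex.orthonormalBasisOneI.repr.apply_symm_apply v.1)
  right_inv z := Circle.ext (Complex.orthonormalBasisOneI.repr.symm_apply_apply z)
  continuous_toFun := by
    refine Continuous.subtype_mk ?_ _
    exact (Complex.orthonormalBasisOneI.repr.symm.continuous.comp continuous_subtype_val)
  continuous_invFun := by
    refine Continuous.subtype_mk ?_ _
    exact (Complex.orthonormalBasisOneI.repr.continuous.comp continuous_subtype_val)

/-- The loop winding `n` times around the circle. -/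
noncomputable def windLoop (n : ℕ) : C(unitInterval, Circle) :=
  ⟨fun t => Circle.exp ((n : ℝ) * (2 * Real.pi) * (t : ℝ)), by fun_prop⟩

lemma windLoop_zero (n : ℕ) : windLoop n 0 = 1 := by simp [windLoop]

lemma windLoop_one (n : ℕ) : windLoop n 1 = 1 := by simp [windLoop]

lemma windLoop_inj {a b : ℕ} (h : (windLoop a).HomotopicRel (windLoop b) {0, 1}) : a = b := by
  have key (n : ℕ) (h0 : windLoop n 0 = Circle.exp 0) :
      Circle.isCoveringMap_exp.liftPath (windLoop n) 0 h0 1 = (n : ℝ) * (2 * Real.pi) := by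
    have := (Circle.isCoveringMap_exp.eq_liftPath_iff h0
      (Γ := fun t : unitInterval => (n : ℝ) * (2 * Real.pi) * (t : ℝ))).2
      ⟨by fun_prop, rfl, by simp⟩
    rw [← this]
    simp
  have h0 (n : ℕ) : windLoop n 0 = Circle.exp 0 := by simp [windLoop_zero]
  have e := Circle.isCoveringMap_exp.liftPath_apply_one_eq_of_homotopicRel h 0 (h0 a) (h0 b)
  rw [key, key] at e
  have hpi : (2 * Real.pi) ≠ 0 := by positivity
  exact_mod_cast mul_right_cancel₀ hpi e

/-- The point of `E(f₁,f₂)` obtained by twisting the track of a homotopy. -/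
noncomputable def twist {X : Type} [TopologicalSpace X] {f₁ f₂ : C(X, Sph 1)}
    (H : f₁.Homotopy f₂) (x : X) (n : ℕ) : HCS f₁ f₂ :=
  ⟨(x, ⟨fun t => sphHomeo.symm (sphHomeo (H (t, x)) * windLoop n t), by fun_prop⟩), by
    simp [windLoop_zero], by simp [windLoop_one]⟩

lemma twist_inj {X : Type} [TopologicalSpace X] {f₁ f₂ : C(X, Sph 1)}
    (H : f₁.Homotopy f₂) (x : X) {a b : ℕ} (h : Joined (twist H x a) (twist H x b)) : a = b := by
  obtain ⟨γ⟩ := h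
  apply windLoop_inj
  refine ⟨⟨⟨⟨fun p => sphHomeo ((γ p.1).1.2 p.2) * (sphHomeo (H (p.2, (γ p.1).1.1)))⁻¹, ?_⟩,
    ?_, ?_⟩, ?_⟩⟩
  · have hγ : Continuous fun p : unitInterval × unitInterval => (γ p.1).1 := by fun_prop
    have h2 : Continuous fun p : unitInterval × unitInterval => (γ p.1).1.2 p.2 := by fun_prop
    fun_prop
  · intro t
    change sphHomeo ((γ 0).1.2 t) * (sphHomeo (H (t, (γ 0).1.1)))⁻¹ = windLoop a t
    rw [γ.source]
    simp [twist]
  · intro t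
    change sphHomeo ((γ 1).1.2 t) * (sphHomeo (H (t, (γ 1).1.1)))⁻¹ = windLoop b t
    rw [γ.target]
    simp [twist]
  · rintro s t (rfl | rfl)
    · have := (γ s).2.1
      simp [this, windLoop_zero]
    · have := (γ s).2.2
      simp [this, windLoop_one]

theorem stmt1 (m : ℕ) (hm : 1 ≤ m) (f₁ f₂ : C(Sph m, Sph 1))
    (h : f₁.Homotopic f₂) :
    Infinite (ZerothHomotopy (HCS f₁ f₂)) := by
  obtain ⟨H⟩ := h
  let x : Sph m := ⟨EuclideanSpace.single 0 1, by simp⟩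
  refine Infinite.of_injective (fun n : ℕ => (Quotient.mk _ (twist H x n) :
    ZerothHomotopy (HCS f₁ f₂))) ?_
  intro a b hab
  exact twist_inj H x (Quotient.exact hab)
end

section
/- Let m ≥ 1, n ≥ 2, and let f₁, f₂ : Sᵐ → Sⁿ be continuous maps such that f₁ is NOT homotopic to a ∘ f₂ (a the antipodal map). Then MCC(f₁,f₂) = 1; that is, for every pair of continuous maps f₁' homotopic to f₁ and f₂' homotopic to f₂ the coincidence set {x : f₁'(x) = f₂'(x)} is nonempty, and there exists such a pair whose coincidence set has exactly one path component. -/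
/-- The antipodal map `a : Sⁿ → Sⁿ`, `a(x) = -x`. -/
noncomputable def antipodal (n : ℕ) : C(Sph n, Sph n) :=
  ⟨fun x => ⟨-(x : EuclideanSpace ℝ (Fin (n + 1))), by
      have hx : ‖(x : EuclideanSpace ℝ (Fin (n + 1)))‖ = 1 :=
        mem_sphere_zero_iff_norm.mp x.2
      simp [mem_sphere_zero_iff_norm, hx]⟩,
   by
    apply Continuous.subtype_mk
    exact continuous_subtype_val.neg⟩


open Set Metric Topology

noncomputable section

namespace MCC

abbrev EE (n : ℕ) : Type := EuclideanSpace ℝ (Fin (n + 1))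

theorem nS {n : ℕ} (x : Sph n) : ‖(x : EE n)‖ = 1 := mem_sphere_zero_iff_norm.mp x.2

/-- normalisation of a nowhere vanishing continuous map -/
def nrm {X : Type*} [TopologicalSpace X] {n : ℕ} (u : X → EE n) (hu : Continuous u)
    (h0 : ∀ x, u x ≠ 0) : C(X, Sph n) :=
  ⟨fun x => ⟨‖u x‖⁻¹ • u x, by
      rw [mem_sphere_zero_iff_norm, norm_smul, norm_inv, norm_norm,
        inv_mul_cancel₀ (norm_ne_zero_iff.mpr (h0 x))]⟩,
   (Continuous.smul (hu.norm.inv₀ fun x => norm_ne_zero_iff.mpr (h0 x)) hu).subtype_mk _⟩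

theorem nrm_smul {X : Type*} [TopologicalSpace X] {n : ℕ} (u : X → EE n) (hu : Continuous u)
    (h0 : ∀ x, u x ≠ 0) (x : X) : u x = ‖u x‖ • (nrm u hu h0 x : EE n) := by
  simp only [nrm, ContinuousMap.coe_mk]
  rw [smul_smul, mul_inv_cancel₀ (norm_ne_zero_iff.mpr (h0 x)), one_smul]

theorem nrm_eq {X : Type*} [TopologicalSpace X] {n : ℕ} (u : X → EE n) (hu : Continuous u)
    (h0 : ∀ x, u x ≠ 0) (x : X) (y : Sph n) (c : ℝ) (hc : 0 ≤ c) (h : u x = c • (y : EE n)) :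
    nrm u hu h0 x = y := by
  have hc' : ‖u x‖ = c := by rw [h, norm_smul, nS, mul_one, Real.norm_of_nonneg hc]
  have h2 : c ≠ 0 := by rw [← hc']; exact norm_ne_zero_iff.mpr (h0 x)
  apply Subtype.ext
  simp only [nrm, ContinuousMap.coe_mk]
  rw [hc', h, smul_smul, inv_mul_cancel₀ h2, one_smul]

theorem ray {n : ℕ} (a b : Sph n) (p q : ℝ) (hp : 0 < p) (h : p • (a : EE n) = q • (b : EE n)) :
    (q = p ∧ (a : EE n) = b) ∨ (q = -p ∧ (a : EE n) = -b) := by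
  have h1 : p = |q| := by
    have := congrArg norm h
    rw [norm_smul, norm_smul, nS, nS, mul_one, mul_one, Real.norm_of_nonneg hp.le] at this
    exact this
  rcases abs_choice q with h2 | h2
  · left
    have : q = p := by rw [h1, h2]
    refine ⟨this, ?_⟩
    rw [this] at h
    exact smul_right_injective _ hp.ne' h
  · right
    have : q = -p := by rw [h1, h2, neg_neg]
    refine ⟨this, ?_⟩
    rw [this, neg_smul, ← smul_neg] at h
    exact smul_right_injective _ hp.ne' h

theorem homotopic_of_ne {X : Type*} [TopologicalSpace X] {n : ℕ} (f g : C(X, Sph n))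
    (h : ∀ x, (f x : EE n) ≠ -(g x : EE n)) : f.Homotopic g := by
  let u : unitInterval × X → EE n := fun p =>
    (1 - (p.1 : ℝ)) • (f p.2 : EE n) + (p.1 : ℝ) • (g p.2 : EE n)
  have hu : Continuous u := by fun_prop
  have h0 : ∀ p, u p ≠ 0 := by
    rintro ⟨t, x⟩ h0
    have h1 : (1 - (t : ℝ)) • (f x : EE n) = (-(t : ℝ)) • (g x : EE n) := by
      rw [neg_smul]; exact eq_neg_of_add_eq_zero_left h0
    rcases t.2.2.lt_or_eq with h2 | h2
    · rcases ray _ _ _ _ (by linarith) h1 with h3 | h3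
      · have := h3.1; linarith
      · exact h x h3.2
    · have h3 := congrArg norm h1
      rw [norm_smul, norm_smul, nS, nS, h2] at h3
      norm_num at h3
  refine ⟨⟨nrm u hu h0, fun x => ?_, fun x => ?_⟩⟩
  · exact nrm_eq u hu h0 _ _ 1 zero_le_one (by simp [u])
  · exact nrm_eq u hu h0 _ _ 1 zero_le_one (by simp [u])

theorem collapse {m n : ℕ} (f₁ f₂ : C(Sph m, Sph n)) (L : Set (Sph m)) (hL : IsClosed L)
    (hLne : L.Nonempty)
    (hC : ∀ x, f₁ x = f₂ x → x ∈ L) (hA : ∀ x ∈ L, (f₁ x : EE n) ≠ -(f₂ x : EE n)) :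
    ∃ g : C(Sph m, Sph n), f₁.Homotopic g ∧ ∀ x, g x = f₂ x ↔ x ∈ L := by
  let u : Sph m → EE n := fun x =>
    infDist x L • (f₁ x : EE n) + ‖(f₁ x : EE n) + f₂ x‖ • (f₂ x : EE n)
  have hu : Continuous u := by
    have := continuous_infDist_pt L
    fun_prop
  have hk : ∀ x ∈ L, 0 < ‖(f₁ x : EE n) + f₂ x‖ := fun x hx =>
    norm_pos_iff.mpr fun h => hA x hx (eq_neg_of_add_eq_zero_left h)
  have hd0 : ∀ x ∈ L, infDist x L = 0 := fun x hx => infDist_zero_of_mem hx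
  have hd : ∀ x, x ∉ L → 0 < infDist x L := fun x hx =>
    (hL.notMem_iff_infDist_pos hLne).mp hx
  have hneg : ∀ x, ∀ s : ℝ, 0 ≤ s → u x ≠ (-s) • (f₁ x : EE n) := by
    intro x s hs h
    have h1 : (infDist x L + s) • (f₁ x : EE n) = (-‖(f₁ x : EE n) + f₂ x‖) • (f₂ x : EE n) := by
      have h2 : infDist x L • (f₁ x : EE n) + ‖(f₁ x : EE n) + f₂ x‖ • (f₂ x : EE n)
        = (-s) • (f₁ x : EE n) := h
      linear_combination (norm := module) h2
    have hnn : 0 ≤ infDist x L := infDist_nonneg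
    rcases (add_nonneg hnn hs).lt_or_eq with h2 | h2
    · rcases ray _ _ _ _ h2 h1 with h3 | h3
      · have := norm_nonneg ((f₁ x : EE n) + f₂ x); linarith [h3.1]
      · have h4 : ‖(f₁ x : EE n) + f₂ x‖ = 0 := by rw [h3.2]; simp
        linarith [h3.1]
    · have hx : x ∈ L := by
        by_contra hx
        linarith [hd x hx]
      have h3 := congrArg norm h1
      rw [norm_smul, norm_smul, nS, nS, ← h2, norm_neg, norm_norm] at h3
      have := hk x hx
      simp at h3
      simp [← h3] at this
  have h0 : ∀ x, u x ≠ 0 := fun x h => hneg x 0 le_rfl (by simpa using h)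
  refine ⟨nrm u hu h0, ?_, fun x => ⟨fun h => ?_, fun hx => ?_⟩⟩
  · apply ContinuousMap.Homotopic.symm
    apply homotopic_of_ne
    intro x h
    apply hneg x ‖u x‖ (norm_nonneg _)
    rw [neg_smul, ← smul_neg, ← h]
    exact nrm_smul u hu h0 x
  · by_contra hx
    have h1 := nrm_smul u hu h0 x
    rw [h] at h1
    have h2 : infDist x L • (f₁ x : EE n) = (‖u x‖ - ‖(f₁ x : EE n) + f₂ x‖) • (f₂ x : EE n) := by
      have h2 : infDist x L • (f₁ x : EE n) + ‖(f₁ x : EE n) + f₂ x‖ • (f₂ x : EE n)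
        = ‖u x‖ • (f₂ x : EE n) := h1
      linear_combination (norm := module) h2
    rcases ray _ _ _ _ (hd x hx) h2 with h3 | h3
    · exact hx (hC x (Subtype.ext h3.2))
    · have h4 : ‖(f₁ x : EE n) + f₂ x‖ = 0 := by rw [h3.2]; simp
      linarith [h3.1, hd x hx, norm_nonneg (u x)]
  · exact nrm_eq u hu h0 x _ _ (hk x hx).le (by simp [u, hd0 x hx])

theorem approx {m n : ℕ} (f : C(Sph m, Sph n)) (ε : ℝ) (hε : 0 < ε) :
    ∃ P : EE m → EE n, ContDiff ℝ 1 P ∧ ∀ x : Sph m, ‖P x - f x‖ < ε := by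
  let t : EE m → Set (EE n) := fun x => {z : EE n | ∀ hx : x ∈ sphere (0 : EE m) 1,
      z ∈ ball (f ⟨x, hx⟩ : EE n) ε}
  have ht : ∀ x, Convex ℝ (t x) := by
    intro x
    simp only [t, setOf_forall]
    exact convex_iInter fun hx => convex_ball _ _
  have hloc : ∀ x : EE m, ∃ c : EE n, ∀ᶠ y in 𝓝 x, c ∈ t y := by
    intro x
    by_cases hx : x ∈ sphere (0 : EE m) 1
    · refine ⟨f ⟨x, hx⟩, ?_⟩
      have hc : Continuous fun y : Sph m => (f y : EE n) := by fun_prop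
      obtain ⟨δ, hδ, h⟩ := Metric.continuous_iff.mp hc ⟨x, hx⟩ ε hε
      filter_upwards [ball_mem_nhds x hδ] with y hy hy'
      rw [mem_ball_comm]
      exact h ⟨y, hy'⟩ hy
    · refine ⟨0, ?_⟩
      filter_upwards [isClosed_sphere.isOpen_compl.mem_nhds hx] with y hy hy'
      exact absurd hy' hy
  obtain ⟨g, hg⟩ := exists_contMDiffMap_forall_mem_convex_of_local_const (n := 1)
    (modelWithCornersSelf ℝ (EE m)) ht hloc
  refine ⟨g, g.contMDiff.contDiff, fun x => ?_⟩
  have := hg x x.2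
  rwa [mem_ball_iff_norm] at this

theorem curve {m : ℕ} (hm : 1 ≤ m) (e c : Sph m) :
    ∃ γ : ℝ → EE m, ContDiff ℝ 1 γ ∧ (∀ t, ‖γ t‖ = 1) ∧ γ 0 = e ∧ γ 1 = c := by
  have key : ∃ w : EE m, ∀ t : ℝ, (1 - t) • (e : EE m) + t • (c : EE m) + (t * (1 - t)) • w ≠ 0 := by
    by_cases hce : (c : EE m) = -e
    · have : Fact (Module.finrank ℝ (EE m) = m + 1) := ⟨by simp⟩
      have he : (e : EE m) ≠ 0 := by
        intro h; have := nS e; rw [h] at this; simp at this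
      have hfr := Submodule.finrank_orthogonal_span_singleton (𝕜 := ℝ) (n := m) he
      have : Nontrivial (Submodule.span ℝ {(e : EE m)})ᗮ :=
        Module.nontrivial_of_finrank_pos (R := ℝ) (by rw [hfr]; omega)
      obtain ⟨⟨w, hw⟩, hw0⟩ := exists_ne (0 : (Submodule.span ℝ {(e : EE m)})ᗮ)
      have hw0 : w ≠ 0 := fun h => hw0 (Subtype.ext h)
      rw [Submodule.mem_orthogonal_singleton_iff_inner_right] at hw
      refine ⟨w, fun t h => ?_⟩
      rw [hce] at h
      have h1 : (1 - 2 * t) • (e : EE m) + (t * (1 - t)) • w = 0 := by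
        linear_combination (norm := module) h
      have h2 := congrArg (fun z => inner ℝ (e : EE m) z) h1
      simp only [inner_add_right, inner_smul_right, hw, real_inner_self_eq_norm_sq, nS] at h2
      simp at h2
      have ht : t = 1 / 2 := by linarith
      rw [ht] at h1
      norm_num at h1
      exact hw0 h1
    · refine ⟨0, fun t h => ?_⟩
      have h1 : (1 - t) • (e : EE m) = (-t) • (c : EE m) := by
        rw [neg_smul]
        apply eq_neg_of_add_eq_zero_left
        simpa using h
      have h2 := congrArg norm h1
      rw [norm_smul, norm_smul, nS, nS, mul_one, mul_one, Real.norm_eq_abs, Real.norm_eq_abs,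
        abs_eq_abs] at h2
      have ht : t = 1 / 2 := by rcases h2 with h2 | h2 <;> linarith
      rw [ht] at h1
      norm_num at h1
      apply hce
      have := smul_right_injective (EE m) (show (1 / 2 : ℝ) ≠ 0 by norm_num)
        (show (1 / 2 : ℝ) • (e : EE m) = (1 / 2 : ℝ) • (-(c : EE m)) by
          rw [smul_neg]; simpa using h1)
      rw [this, neg_neg]
  obtain ⟨w, hw⟩ := key
  have hs : ContDiff ℝ 1 fun t : ℝ => (1 - t) • (e : EE m) + t • (c : EE m) + (t * (1 - t)) • w := by
    fun_prop
  refine ⟨fun t => ‖(1 - t) • (e : EE m) + t • (c : EE m) + (t * (1 - t)) • w‖⁻¹ •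
    ((1 - t) • (e : EE m) + t • (c : EE m) + (t * (1 - t)) • w), ?_, ?_, ?_, ?_⟩
  · exact ((hs.norm ℝ hw).inv fun t => norm_ne_zero_iff.mpr (hw t)).smul hs
  · intro t
    rw [norm_smul, norm_inv, norm_norm, inv_mul_cancel₀ (norm_ne_zero_iff.mpr (hw t))]
  · simp
  · simp

theorem cap {m : ℕ} (c x : Sph m) (r : ℝ) (hr : r ≤ 1) (hx : x ∈ closedBall c r) :
    JoinedIn (closedBall c r) c x := by
  have hxr : ‖(x : EE m) - c‖ ≤ r := by
    rw [mem_closedBall, Subtype.dist_eq, dist_eq_norm] at hx; exact hx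
  have hr0 : 0 ≤ r := (norm_nonneg _).trans hxr
  have hsq : ∀ y : Sph m, ‖(y : EE m) - c‖ ^ 2 = 2 - 2 * inner ℝ (y : EE m) (c : EE m) := by
    intro y
    rw [norm_sub_sq_real, nS, nS]; ring
  have hin : (1 : ℝ) / 2 ≤ inner ℝ (x : EE m) (c : EE m) := by
    have := hsq x
    nlinarith [norm_nonneg ((x : EE m) - c)]
  let u : unitInterval → EE m := fun t => (1 - (t : ℝ)) • (c : EE m) + (t : ℝ) • (x : EE m)
  have hu : Continuous u := by fun_prop
  have hin1 : inner ℝ (x : EE m) (c : EE m) ≤ 1 := by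
    have := hsq x
    nlinarith [sq_nonneg ‖(x : EE m) - c‖]
  have hui : ∀ t, inner ℝ (x : EE m) (c : EE m) ≤ inner ℝ (u t) (c : EE m) := by
    intro t
    simp only [u, inner_add_left, inner_smul_left, real_inner_self_eq_norm_sq, nS]
    have := t.2.1
    have := t.2.2
    simp
    nlinarith
  have h0 : ∀ t, u t ≠ 0 := by
    intro t h
    have := hui t
    rw [h, inner_zero_left] at this
    linarith
  refine ⟨⟨nrm u hu h0, ?_, ?_⟩, fun t => ?_⟩
  · exact nrm_eq u hu h0 _ _ 1 zero_le_one (by simp [u])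
  · exact nrm_eq u hu h0 _ _ 1 zero_le_one (by simp [u])
  · change nrm u hu h0 t ∈ _
    rw [mem_closedBall, Subtype.dist_eq, dist_eq_norm]
    refine le_trans ?_ hxr
    apply le_of_sq_le_sq _ (norm_nonneg _)
    rw [hsq, hsq]
    have hn : ‖u t‖ ≤ 1 := by
      refine (norm_add_le _ _).trans ?_
      rw [norm_smul, norm_smul, nS, nS, Real.norm_of_nonneg (by linarith [t.2.2]),
        Real.norm_of_nonneg t.2.1]
      linarith
    have h1 := hui t
    rw [nrm_smul u hu h0 t, inner_smul_left] at h1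
    simp only [conj_trivial] at h1
    have h2 : 0 < ‖u t‖ := norm_pos_iff.mpr (h0 t)
    have h3 : 0 < inner ℝ (nrm u hu h0 t : EE m) (c : EE m) := by
      by_contra h3
      push Not at h3
      nlinarith
    nlinarith

end MCC

namespace MCC

theorem nrm_close {X : Type*} [TopologicalSpace X] {n : ℕ} (u : X → EE n) (hu : Continuous u)
    (h0 : ∀ x, u x ≠ 0) (x : X) (y : Sph n) (ε : ℝ) (h : ‖u x - y‖ < ε) :
    ‖(nrm u hu h0 x : EE n) - y‖ < 2 * ε := by
  have h1 : ‖(nrm u hu h0 x : EE n) - u x‖ = |1 - ‖u x‖| := by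
    conv_lhs => rw [nrm_smul u hu h0 x]
    rw [show (nrm u hu h0 x : EE n) - ‖u x‖ • (nrm u hu h0 x : EE n)
      = (1 - ‖u x‖) • (nrm u hu h0 x : EE n) by module, norm_smul, nS, mul_one, Real.norm_eq_abs]
  have h2 : |1 - ‖u x‖| ≤ ‖u x - y‖ := by
    have h3 := abs_norm_sub_norm_le (y : EE n) (u x)
    rwa [nS, norm_sub_rev] at h3
  have h3 := norm_sub_le_norm_sub_add_norm_sub (nrm u hu h0 x : EE n) (u x) (y : EE n)
  linarith

theorem part_one {m n : ℕ} (f₁ f₂ : C(Sph m, Sph n))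
    (h : ¬ f₁.Homotopic ((antipodal n).comp f₂)) :
    ∀ f₁' f₂' : C(Sph m, Sph n), f₁.Homotopic f₁' → f₂.Homotopic f₂' →
      ∃ x, f₁' x = f₂' x := by
  intro g₁ g₂ h₁ h₂
  by_contra hne
  push Not at hne
  apply h
  refine h₁.trans (ContinuousMap.Homotopic.trans ?_
    (ContinuousMap.Homotopic.comp (.refl _) h₂.symm))
  apply homotopic_of_ne
  intro x hx
  apply hne x
  apply Subtype.ext
  rw [hx]
  simp [antipodal]

theorem exists_shift {m n : ℕ} (hn : 2 ≤ n) (P₁ P₂ : EE m → EE n) (h₁ : ContDiff ℝ 1 P₁)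
    (h₂ : ContDiff ℝ 1 P₂) {ι : Type*} (T : Set ι) (hT : T.Countable) (γ : ι → ℝ → EE m)
    (hγ : ∀ i, ContDiff ℝ 1 (γ i)) (ε : ℝ) (hε : 0 < ε) :
    ∃ v : EE n, ‖v‖ < ε ∧ ∀ i ∈ T, ∀ s t : ℝ, P₁ (γ i t) + v ≠ s • P₂ (γ i t) := by
  let F : ι → ℝ × ℝ → EE n := fun i p => p.1 • P₂ (γ i p.2) - P₁ (γ i p.2)
  have hF : ∀ i, ContDiff ℝ 1 (F i) := by
    intro i
    have := hγ i
    fun_prop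
  have hd : dimH (⋃ i ∈ T, range (F i)) < Module.finrank ℝ (EE n) := by
    rw [dimH_bUnion hT]
    have h3 : (⨆ i ∈ T, dimH (range (F i))) ≤ 2 := by
      refine iSup₂_le fun i _ => (hF i).dimH_range_le.trans ?_
      simp
    refine h3.trans_lt ?_
    rw [finrank_euclideanSpace_fin]
    exact_mod_cast (by omega : 2 < n + 1)
  obtain ⟨v, hv, hv2⟩ := (dense_compl_of_dimH_lt_finrank hd).exists_mem_open
    (isOpen_ball (x := (0 : EE n)) (ε := ε)) ⟨0, mem_ball_self hε⟩
  refine ⟨v, by simpa using hv2, fun i hi s t h => hv ?_⟩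
  refine mem_biUnion hi ⟨(s, t), ?_⟩
  simp only [F]
  rw [← h]; abel

theorem main {m n : ℕ} (hm : 1 ≤ m) (hn : 2 ≤ n) (f₁ f₂ : C(Sph m, Sph n))
    (x₀ : Sph m) (hx₀ : f₁ x₀ = f₂ x₀) :
    ∃ (g₁ g₂ : C(Sph m, Sph n)) (L : Set (Sph m)), f₁.Homotopic g₁ ∧ f₂.Homotopic g₂ ∧
      IsClosed L ∧ IsPathConnected L ∧ (∀ x, g₁ x = g₂ x → x ∈ L) ∧
      ∀ x ∈ L, (g₁ x : EE n) ≠ -(g₂ x : EE n) := by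
  obtain ⟨P₁, hP₁, hc₁⟩ := approx f₁ (1 / 20) (by norm_num)
  obtain ⟨P₂, hP₂, hc₂⟩ := approx f₂ (1 / 20) (by norm_num)
  let D : Sph m → ℝ := fun x => ‖(f₁ x : EE n) - f₂ x‖
  have hD : Continuous D := by fun_prop
  let K : Set (Sph m) := {x | D x ≤ 1}
  have hK : IsCompact K := (isClosed_le hD continuous_const).isCompact
  have hr : ∀ c : Sph m, ∃ r : ℝ, 0 < r ∧ r ≤ 1 ∧ (c ∈ K → ∀ x ∈ closedBall c r, D x < 3 / 2) := by
    intro c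
    by_cases hc : c ∈ K
    · have : {x | D x < 3 / 2} ∈ 𝓝 c :=
        (isOpen_lt hD continuous_const).mem_nhds (show D c < 3 / 2 from lt_of_le_of_lt hc (by norm_num))
      obtain ⟨r, hr, h⟩ := nhds_basis_closedBall.mem_iff.mp this
      exact ⟨min r 1, lt_min hr one_pos, min_le_right _ _, fun _ x hx =>
        h (closedBall_subset_closedBall (min_le_left _ _) hx)⟩
    · exact ⟨1, one_pos, le_rfl, fun h => absurd h hc⟩
  choose r hr0 hr1 hrD using hr
  obtain ⟨T, hTK, hcov⟩ := hK.elim_nhds_subcover (fun c => closedBall c (r c))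
    (fun c _ => closedBall_mem_nhds c (hr0 c))
  have hγ := fun c => curve hm x₀ c
  choose γ hγs hγn hγ0 hγ1 using hγ
  obtain ⟨v, hv, hvne⟩ := exists_shift hn P₁ P₂ hP₁ hP₂ (T : Set (Sph m)) T.countable_toSet γ hγs
    (1 / 20) (by norm_num)
  let u₁ : Sph m → EE n := fun x => P₁ x + v
  let u₂ : Sph m → EE n := fun x => P₂ x
  have hu₁ : Continuous u₁ := by have := hP₁.continuous; fun_prop
  have hu₂ : Continuous u₂ := by have := hP₂.continuous; fun_prop
  have hd₁ : ∀ x, ‖u₁ x - f₁ x‖ < 1 / 10 := by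
    intro x
    have h1 : u₁ x - f₁ x = (P₁ x - f₁ x) + v := by simp only [u₁]; abel
    rw [h1]
    linarith [norm_add_le (P₁ x - f₁ x) v, hc₁ x]
  have hd₂ : ∀ x, ‖u₂ x - f₂ x‖ < 1 / 20 := hc₂
  have h0₁ : ∀ x, u₁ x ≠ 0 := by
    intro x h
    have := hd₁ x
    rw [h, zero_sub, norm_neg, nS] at this
    norm_num at this
  have h0₂ : ∀ x, u₂ x ≠ 0 := by
    intro x h
    have := hd₂ x
    rw [h, zero_sub, norm_neg, nS] at this
    norm_num at this
  have hg₁ := fun x => nrm_close u₁ hu₁ h0₁ x _ _ (hd₁ x)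
  have hg₂ := fun x => nrm_close u₂ hu₂ h0₂ x _ _ (hd₂ x)
  set g₁ := nrm u₁ hu₁ h0₁ with hg₁def
  set g₂ := nrm u₂ hu₂ h0₂ with hg₂def
  have hclose : ∀ f g : C(Sph m, Sph n), (∀ x, ‖(g x : EE n) - f x‖ < 1) → f.Homotopic g := by
    intro f g h
    apply homotopic_of_ne
    intro x hx
    have h1 := h x
    rw [hx, sub_neg_eq_add, ← two_smul ℝ, norm_smul, nS] at h1
    norm_num at h1
  let δ : Sph m → ℝ → Sph m := fun c t => ⟨γ c t, mem_sphere_zero_iff_norm.mpr (hγn c t)⟩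
  have hδ : ∀ c, Continuous (δ c) := fun c => (hγs c).continuous.subtype_mk _
  have hδ0 : ∀ c, δ c 0 = x₀ := fun c => Subtype.ext (hγ0 c)
  have hδ1 : ∀ c, δ c 1 = c := fun c => Subtype.ext (hγ1 c)
  let L : Set (Sph m) := ⋃ c ∈ T, (closedBall c (r c) ∪ δ c '' unitInterval)
  have hx₀K : x₀ ∈ K := by
    change ‖(f₁ x₀ : EE n) - f₂ x₀‖ ≤ 1
    rw [hx₀]; simp
  have hKL : K ⊆ L := hcov.trans (iUnion₂_mono fun c _ => subset_union_left)
  refine ⟨g₁, g₂, L, ?_, ?_, ?_, ?_, ?_, ?_⟩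
  · exact hclose _ _ fun x => (hg₁ x).trans (by norm_num)
  · exact hclose _ _ fun x => (hg₂ x).trans (by norm_num)
  · exact T.finite_toSet.isClosed_biUnion fun c _ =>
      isClosed_closedBall.union (isCompact_Icc.image (hδ c)).isClosed
  · refine ⟨x₀, hKL hx₀K, ?_⟩
    intro x hx
    obtain ⟨c, hcT, hx⟩ := mem_iUnion₂.mp hx
    have hsub : closedBall c (r c) ∪ δ c '' unitInterval ⊆ L := fun y hy =>
      mem_iUnion₂.mpr ⟨c, hcT, hy⟩
    have hpc : IsPathConnected (δ c '' unitInterval) :=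
      ((convex_Icc (0 : ℝ) 1).isPathConnected ⟨0, by simp⟩).image (hδ c)
    have hx0m : x₀ ∈ δ c '' unitInterval := ⟨0, by simp, hδ0 c⟩
    have hcm : c ∈ δ c '' unitInterval := ⟨1, by simp, hδ1 c⟩
    rcases hx with hx | hx
    · exact ((hpc.joinedIn _ hx0m _ hcm).mono (subset_union_right.trans hsub)).trans
        ((cap c x (r c) (hr1 c) hx).mono (subset_union_left.trans hsub))
    · exact (hpc.joinedIn _ hx0m _ hx).mono (subset_union_right.trans hsub)
  · intro x hx
    apply hKL
    change ‖(f₁ x : EE n) - f₂ x‖ ≤ 1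
    have h1 := hg₁ x
    have h2 := hg₂ x
    rw [hx] at h1
    have h3 := norm_sub_le_norm_sub_add_norm_sub (f₁ x : EE n) (g₂ x : EE n) (f₂ x : EE n)
    rw [norm_sub_rev] at h1
    linarith
  · intro x hx hneg
    obtain ⟨c, hcT, hx⟩ := mem_iUnion₂.mp hx
    rcases hx with hx | ⟨t, -, rfl⟩
    · have h1 := hg₁ x
      have h2 := hg₂ x
      have h3 : ‖(f₁ x : EE n) - f₂ x‖ < 3 / 2 := hrD c (hTK c hcT) x hx
      have h4 := norm_sub_le_norm_sub_add_norm_sub (g₁ x : EE n) (f₁ x : EE n) (g₂ x : EE n)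
      have h5 := norm_sub_le_norm_sub_add_norm_sub (f₁ x : EE n) (f₂ x : EE n) (g₂ x : EE n)
      have h6 : ‖(g₁ x : EE n) - g₂ x‖ = 2 := by
        rw [hneg, show -(g₂ x : EE n) - g₂ x = (-2 : ℝ) • (g₂ x : EE n) by module, norm_smul, nS]
        norm_num
      rw [norm_sub_rev] at h2
      linarith
    · have e₁ := nrm_smul u₁ hu₁ h0₁ (δ c t)
      have e₂ := nrm_smul u₂ hu₂ h0₂ (δ c t)
      rw [← hg₁def, hneg] at e₁
      rw [← hg₂def] at e₂
      apply hvne c hcT (-(‖u₁ (δ c t)‖ * ‖u₂ (δ c t)‖⁻¹)) t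
      change u₁ (δ c t) = _ • u₂ (δ c t)
      have hne : ‖u₂ (δ c t)‖ ≠ 0 := norm_ne_zero_iff.mpr (h0₂ _)
      have e₃ : (g₂ (δ c t) : EE n) = ‖u₂ (δ c t)‖⁻¹ • u₂ (δ c t) := rfl
      rw [neg_smul, mul_smul, ← e₃, ← smul_neg]
      exact e₁

end MCC

end

theorem stmt3 (m n : ℕ) (hm : 1 ≤ m) (hn : 2 ≤ n)
    (f₁ f₂ : C(Sph m, Sph n))
    (h : ¬ f₁.Homotopic ((antipodal n).comp f₂)) :
    (∀ f₁' f₂' : C(Sph m, Sph n), f₁.Homotopic f₁' → f₂.Homotopic f₂' →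
      ∃ x, f₁' x = f₂' x) ∧
    (∃ f₁' f₂' : C(Sph m, Sph n), f₁.Homotopic f₁' ∧ f₂.Homotopic f₂' ∧
      PathConnectedSpace {x : Sph m // f₁' x = f₂' x}) := by
  refine ⟨MCC.part_one f₁ f₂ h, ?_⟩
  obtain ⟨x₀, hx₀⟩ := MCC.part_one f₁ f₂ h f₁ f₂ (.refl _) (.refl _)
  obtain ⟨g₁, g₂, L, h₁, h₂, hLc, hLp, hC, hA⟩ := MCC.main hm hn f₁ f₂ x₀ hx₀
  obtain ⟨g, hg, hgL⟩ := MCC.collapse g₁ g₂ L hLc hLp.nonempty hC hA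
  refine ⟨g, g₂, h₁.trans hg, h₂, ?_⟩
  have hset : {x : Sph m | g x = g₂ x} = L := Set.ext hgL
  rw [← hset] at hLp
  exact isPathConnected_iff_pathConnectedSpace.mp hLp
end

section
/- Let m, n ≥ 1 and let A₁, A₂ be n×m integer matrices, with induced homomorphisms f_{A₁}, f_{A₂} : Tᵐ → Tⁿ of tori. Then there is a bijection between the set of path components of the homotopy coincidence space E(f_{A₁}, f_{A₂}) and the quotient group ℤⁿ / (A₁−A₂)(ℤᵐ), where (A₁−A₂)(ℤᵐ) is the image of the ℤ-linear map ℤᵐ → ℤⁿ given by the matrix A₁−A₂. -/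
/-- The `k`-torus `(ℝ/ℤ)ᵏ`. -/
abbrev Torus (k : ℕ) : Type := Fin k → AddCircle (1 : ℝ)

/-- The continuous homomorphism `Tᵐ → Tⁿ` induced by an `n × m` integer matrix. -/
noncomputable def torusHom {m n : ℕ} (A : Matrix (Fin n) (Fin m) ℤ) :
    C(Torus m, Torus n) :=
  ⟨fun x j => ∑ i, A j i • x i, by
    refine continuous_pi fun j => ?_
    exact continuous_finset_sum _ fun i _ => (continuous_apply i).zsmul (A j i)⟩

open unitInterval

abbrev aff {m n : ℕ} (A : Matrix (Fin n) (Fin m) ℤ) (x : Fin m → ℝ) : Fin n → ℝ :=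
  fun j => ∑ i, (A j i : ℝ) * x i

theorem aff_continuous {m n : ℕ} (A : Matrix (Fin n) (Fin m) ℤ) : Continuous (aff A) := by
  unfold aff; fun_prop

abbrev tc {k : ℕ} (x : Fin k → ℝ) : Torus k := fun i => (x i : AddCircle (1 : ℝ))

theorem tc_continuous {k : ℕ} : Continuous (tc (k := k)) :=
  continuous_pi fun i => (AddCircle.continuous_mk' (1 : ℝ)).comp (continuous_apply i)

theorem torusHom_tc {m n : ℕ} (A : Matrix (Fin n) (Fin m) ℤ) (x : Fin m → ℝ) :
    torusHom A (tc x) = tc (aff A x) := by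
  funext j
  show ∑ i, A j i • (x i : AddCircle (1 : ℝ)) = ((∑ i, (A j i : ℝ) * x i : ℝ) : AddCircle (1 : ℝ))
  have h : ∀ s : Finset (Fin m), ∑ i ∈ s, A j i • (x i : AddCircle (1 : ℝ))
      = ((∑ i ∈ s, (A j i : ℝ) * x i : ℝ) : AddCircle (1 : ℝ)) := by
    intro s
    induction s using Finset.induction_on with
    | empty => simp
    | insert a s ha ih =>
      rw [Finset.sum_insert ha, Finset.sum_insert ha, AddCircle.coe_add, ih, ← AddCircle.coe_zsmul,
        zsmul_eq_mul]
  exact h _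

theorem coe_eq_iff (a b : ℝ) :
    (a : AddCircle (1 : ℝ)) = b ↔ ∃ z : ℤ, a = b + z := by
  rw [← sub_eq_zero, ← AddCircle.coe_sub, AddCircle.coe_eq_zero_iff]
  constructor
  · rintro ⟨z, hz⟩
    exact ⟨z, by simp at hz; linarith⟩
  · rintro ⟨z, hz⟩
    exact ⟨z, by simp; linarith⟩

theorem tc_eq_iff {k : ℕ} (a b : Fin k → ℝ) :
    tc a = tc b ↔ ∃ z : Fin k → ℤ, a = b + fun i => (z i : ℝ) := by
  constructor
  · intro h
    choose z hz using fun i => (coe_eq_iff (a i) (b i)).1 (congrFun h i)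
    exact ⟨z, funext hz⟩
  · rintro ⟨z, hz⟩
    funext i
    exact (coe_eq_iff _ _).2 ⟨z i, congrFun hz i⟩

theorem tc_surj {k : ℕ} (y : Torus k) : ∃ x, tc x = y := by
  choose x hx using fun i => QuotientAddGroup.mk_surjective (y i)
  exact ⟨x, funext hx⟩

theorem aff_add {m n : ℕ} (A : Matrix (Fin n) (Fin m) ℤ) (x y : Fin m → ℝ) :
    aff A (x + y) = aff A x + aff A y := by
  funext j; simp [aff, mul_add, Finset.sum_add_distrib]

theorem aff_smul {m n : ℕ} (A : Matrix (Fin n) (Fin m) ℤ) (t : ℝ) (x : Fin m → ℝ) :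
    aff A (t • x) = t • aff A x := by
  funext j; simp [aff, Finset.mul_sum, mul_left_comm]

theorem aff_int {m n : ℕ} (A : Matrix (Fin n) (Fin m) ℤ) (k : Fin m → ℤ) :
    aff A (fun i => (k i : ℝ)) = fun j => ((A.mulVec k j : ℤ) : ℝ) := by
  funext j; simp [aff, Matrix.mulVec, dotProduct]

/-- Two real lifts of the same torus path differ by a constant. -/
theorem lift_unique {k : ℕ} (f g : C(I, Fin k → ℝ)) (h : ∀ s, tc (f s) = tc (g s)) (s : I) :
    f s = g s + (f 0 - g 0) := by
  funext i
  have h0 : (f 0 i : AddCircle (1 : ℝ)) = g 0 i := congrFun (h 0) i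
  obtain ⟨z, hz⟩ := (coe_eq_iff _ _).1 h0
  have := (AddCircle.isCoveringMap_coe (1 : ℝ)).eq_of_comp_eq (A := I)
    (g₁ := fun s => f s i) (g₂ := fun s => g s i + z) (by fun_prop) (by fun_prop)
    (by
      funext s
      have hs : (f s i : AddCircle (1 : ℝ)) = g s i := congrFun (h s) i
      show (f s i : AddCircle (1 : ℝ)) = ((g s i + z : ℝ) : AddCircle (1 : ℝ))
      rw [hs]
      exact ((coe_eq_iff _ _).2 ⟨z, rfl⟩).symm) 0 hz
  have h2 := congrFun this s
  simp only [Pi.add_apply, Pi.sub_apply]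
  linarith

theorem lift_homotopy {k : ℕ} {A : Type} [TopologicalSpace A] (H : C(I × A, Torus k))
    (f : C(A, Fin k → ℝ)) (h0 : ∀ a, H (0, a) = tc (f a)) :
    ∃ G : C(I × A, Fin k → ℝ), (∀ p, tc (G p) = H p) ∧ ∀ a, G (0, a) = f a := by
  have key : ∀ i, ∃ G : C(I × A, ℝ), (∀ p, (G p : AddCircle (1 : ℝ)) = H p i) ∧
      ∀ a, G (0, a) = f a i := by
    intro i
    let Hi : C(I × A, AddCircle (1 : ℝ)) := ⟨fun p => H p i, by fun_prop⟩
    let fi : C(A, ℝ) := ⟨fun a => f a i, by fun_prop⟩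
    have hh : ∀ a, Hi (0, a) = ((fi a : ℝ) : AddCircle (1 : ℝ)) := fun a => congrFun (h0 a) i
    exact ⟨(AddCircle.isCoveringMap_coe (1 : ℝ)).liftHomotopy Hi fi hh,
      fun p => congrFun ((AddCircle.isCoveringMap_coe (1 : ℝ)).liftHomotopy_lifts Hi fi hh) p,
      fun a => (AddCircle.isCoveringMap_coe (1 : ℝ)).liftHomotopy_zero Hi fi hh a⟩
  choose G h1 h2 using key
  exact ⟨⟨fun p i => G i p, by fun_prop⟩, fun p => funext fun i => h1 i p,
    fun a => funext fun i => h2 i a⟩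

theorem lift_path {k : ℕ} (γ : C(I, Torus k)) (e : Fin k → ℝ) (h0 : γ 0 = tc e) :
    ∃ G : C(I, Fin k → ℝ), (∀ p, tc (G p) = γ p) ∧ G 0 = e := by
  obtain ⟨G, h1, h2⟩ := lift_homotopy (A := Unit) (γ.comp ⟨Prod.fst, continuous_fst⟩)
    (ContinuousMap.const _ e) (fun a => h0)
  exact ⟨⟨fun s => G (s, ()), by fun_prop⟩, fun p => h1 (p, ()), h2 ()⟩

section rel
variable {m n : ℕ} (A₁ A₂ : Matrix (Fin n) (Fin m) ℤ)

def CRel (p : HCS (torusHom A₁) (torusHom A₂)) (c : Fin n → ℤ) : Prop :=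
  ∃ (x : Fin m → ℝ) (θ : C(I, Fin n → ℝ)), tc x = p.1.1 ∧ (∀ s, tc (θ s) = p.1.2 s) ∧
    θ 0 = aff A₁ x ∧ θ 1 = aff A₂ x + fun j => (c j : ℝ)

theorem rel_exists (p : HCS (torusHom A₁) (torusHom A₂)) : ∃ c, CRel A₁ A₂ p c := by
  obtain ⟨x, hx⟩ := tc_surj p.1.1
  obtain ⟨θ, h1, h2⟩ := lift_path p.1.2 (aff A₁ x) (by rw [p.2.1, ← hx, torusHom_tc])
  obtain ⟨c, hc⟩ := (tc_eq_iff (θ 1) (aff A₂ x)).1 (by rw [h1, p.2.2, ← hx, torusHom_tc])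
  exact ⟨c, x, θ, hx, h1, h2, hc⟩

theorem rel_unique (p : HCS (torusHom A₁) (torusHom A₂)) (c c' : Fin n → ℤ)
    (h : CRel A₁ A₂ p c) (h' : CRel A₁ A₂ p c') :
    ∃ k, (A₁ - A₂).mulVec k = c - c' := by
  obtain ⟨x, θ, h1, h2, h3, h4⟩ := h
  obtain ⟨x', θ', h1', h2', h3', h4'⟩ := h'
  obtain ⟨k, rfl⟩ := (tc_eq_iff x x').1 (h1.trans h1'.symm)
  have := lift_unique θ θ' (fun s => (h2 s).trans (h2' s).symm) 1
  rw [h3, h3', h4, h4', aff_add, aff_add, aff_int, aff_int] at this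
  refine ⟨k, ?_⟩
  funext j
  have hj := congrFun this j
  simp only [Pi.add_apply, Pi.sub_apply] at hj
  rw [Matrix.sub_mulVec]
  simp only [Pi.sub_apply]
  have : ((A₁.mulVec k j - A₂.mulVec k j : ℤ) : ℝ) = ((c j - c' j : ℤ) : ℝ) := by
    push_cast; linarith
  exact_mod_cast this

theorem rel_shift (p : HCS (torusHom A₁) (torusHom A₂)) (c : Fin n → ℤ) (k : Fin m → ℤ)
    (h : CRel A₁ A₂ p c) : CRel A₁ A₂ p (c + (A₁ - A₂).mulVec k) := by
  obtain ⟨x, θ, h1, h2, h3, h4⟩ := h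
  refine ⟨x + fun i => (k i : ℝ), ⟨fun s => θ s + aff A₁ (fun i => (k i : ℝ)), by fun_prop⟩,
    ?_, ?_, ?_, ?_⟩
  · rw [← h1]; exact (tc_eq_iff _ _).2 ⟨k, rfl⟩
  · intro s
    rw [← h2]; exact (tc_eq_iff _ _).2 ⟨A₁.mulVec k, by simp [aff_int]⟩
  · simp [h3, aff_add]
  · simp only [ContinuousMap.coe_mk, h4, aff_add, aff_int, Matrix.sub_mulVec]
    funext j
    simp
    ring

theorem rel_path (p q : HCS (torusHom A₁) (torusHom A₂)) (c : Fin n → ℤ)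
    (h : CRel A₁ A₂ p c) (γ : Path p q) : CRel A₁ A₂ q c := by
  obtain ⟨x, θ, h1, h2, h3, h4⟩ := h
  obtain ⟨X, hX, hX0⟩ := lift_path ⟨fun t => (γ t).1.1, by fun_prop⟩ x (by simp [h1])
  obtain ⟨G, hG, hG0⟩ := lift_homotopy (A := I) (k := n)
    ⟨fun p : I × I => (γ p.2).1.2 p.1, by fun_prop⟩
    ⟨fun t => aff A₁ (X t), (aff_continuous A₁).comp X.continuous⟩
    (by
      intro t
      show (γ t).1.2 0 = tc (aff A₁ (X t))
      rw [(γ t).2.1, ← torusHom_tc, hX]; rfl)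
  have hG0' : ∀ t, G (0, t) = aff A₁ (X t) := hG0
  have hG' : ∀ s t, tc (G (s, t)) = (γ t).1.2 s := fun s t => hG (s, t)
  have e1 := lift_unique ⟨fun s => G (s, 0), by fun_prop⟩ θ
    (fun s => by rw [h2]; simp [hG']) 1
  have e2 := lift_unique ⟨fun t => G (1, t), by fun_prop⟩
    ⟨fun t => aff A₂ (X t), (aff_continuous A₂).comp X.continuous⟩
    (fun t => by
      show tc (G (1, t)) = tc (aff A₂ (X t))
      rw [hG', (γ t).2.2, ← torusHom_tc, hX]; rfl) 1
  simp only [ContinuousMap.coe_mk, hG0', hX0, h3, h4, sub_self, add_zero] at e1 e2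
  refine ⟨X 1, ⟨fun s => G (s, 1), by fun_prop⟩, ?_, ?_, hG0' 1, ?_⟩
  · rw [hX]; simp
  · intro s
    show tc (G (s, 1)) = _
    rw [hG']; simp
  · simp only [ContinuousMap.coe_mk]
    rw [e2, e1]; simp

theorem rel_joined (p q : HCS (torusHom A₁) (torusHom A₂)) (c : Fin n → ℤ)
    (h : CRel A₁ A₂ p c) (h' : CRel A₁ A₂ q c) : Joined p q := by
  obtain ⟨x, θ, h1, h2, h3, h4⟩ := h
  obtain ⟨x', θ', h1', h2', h3', h4'⟩ := h'
  let X : I → Fin m → ℝ := fun t => (1 - (t : ℝ)) • x + (t : ℝ) • x'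
  have hX : Continuous X := by fun_prop
  let F : C(I × I, Torus n) := ⟨fun p => tc ((1 - (p.1 : ℝ)) • θ p.2 + (p.1 : ℝ) • θ' p.2),
    tc_continuous.comp (by fun_prop)⟩
  have hF : ∀ t s, F.curry t s = tc ((1 - (t : ℝ)) • θ s + (t : ℝ) • θ' s) := fun t s => rfl
  have hXA : ∀ (A : Matrix (Fin n) (Fin m) ℤ) t,
      aff A (X t) = (1 - (t : ℝ)) • aff A x + (t : ℝ) • aff A x' := by
    intro A t
    simp only [X, aff_add, aff_smul]
  refine ⟨⟨⟨fun t => ⟨(tc (X t), F.curry t), ?_, ?_⟩, ?_⟩, ?_, ?_⟩⟩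
  · show F.curry t 0 = torusHom A₁ (tc (X t))
    rw [hF, torusHom_tc, hXA, h3, h3']
  · show F.curry t 1 = torusHom A₂ (tc (X t))
    rw [hF, torusHom_tc, hXA, h4, h4']
    refine (tc_eq_iff _ _).2 ⟨c, ?_⟩
    funext j
    simp
    ring
  · exact ((tc_continuous.comp hX).prodMk F.curry.continuous).subtype_mk _
  · refine Subtype.ext (Prod.ext ?_ ?_)
    · show tc (X 0) = _
      rw [← h1]; simp [X]
    · ext1 s
      show F.curry 0 s = _
      rw [hF, ← h2]; simp
  · refine Subtype.ext (Prod.ext ?_ ?_)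
    · show tc (X 1) = _
      rw [← h1']; simp [X]
    · ext1 s
      show F.curry 1 s = _
      rw [hF, ← h2']; simp

theorem rel_surj (c : Fin n → ℤ) : ∃ p, CRel A₁ A₂ p c := by
  let θ : C(I, Fin n → ℝ) := ⟨fun s => (s : ℝ) • fun j => (c j : ℝ), by fun_prop⟩
  have z : ∀ A : Matrix (Fin n) (Fin m) ℤ, aff A 0 = 0 := by intro A; funext j; simp [aff]
  refine ⟨⟨(tc 0, ⟨fun s => tc (θ s), tc_continuous.comp θ.continuous⟩), ?_, ?_⟩, 0, θ,
    rfl, fun s => rfl, ?_, ?_⟩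
  · show tc (θ 0) = torusHom A₁ (tc 0)
    rw [torusHom_tc, z]; simp [θ]
  · show tc (θ 1) = torusHom A₂ (tc 0)
    rw [torusHom_tc, z]
    exact (tc_eq_iff _ _).2 ⟨c, by simp [θ]⟩
  · rw [z]; simp [θ]
  · rw [z]; simp [θ]

end rel

theorem stmt4 (m n : ℕ) (hm : 1 ≤ m) (hn : 1 ≤ n)
    (A₁ A₂ : Matrix (Fin n) (Fin m) ℤ) :
    Nonempty (ZerothHomotopy (HCS (torusHom A₁) (torusHom A₂)) ≃
      ((Fin n → ℤ) ⧸ LinearMap.range (A₁ - A₂).mulVecLin)) := by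
  choose c hc using rel_exists A₁ A₂
  have mk_eq : ∀ p a, CRel A₁ A₂ p a →
      (Submodule.Quotient.mk (c p) : (Fin n → ℤ) ⧸ LinearMap.range (A₁ - A₂).mulVecLin)
        = Submodule.Quotient.mk a := by
    intro p a ha
    rw [Submodule.Quotient.eq]
    obtain ⟨k, hk⟩ := rel_unique A₁ A₂ p _ _ (hc p) ha
    exact ⟨k, hk⟩
  let φ : ZerothHomotopy (HCS (torusHom A₁) (torusHom A₂)) →
      ((Fin n → ℤ) ⧸ LinearMap.range (A₁ - A₂).mulVecLin) :=
    Quotient.lift (fun p => Submodule.Quotient.mk (c p))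
      (fun p q (h : Joined p q) =>
        (mk_eq q (c p) (rel_path A₁ A₂ p q _ (hc p) h.somePath)).symm)
  refine ⟨Equiv.ofBijective φ ⟨?_, ?_⟩⟩
  · intro a b
    induction a using Quotient.inductionOn with | _ p
    induction b using Quotient.inductionOn with | _ q
    intro h
    have h' : (Submodule.Quotient.mk (c q) : (Fin n → ℤ) ⧸ LinearMap.range (A₁ - A₂).mulVecLin)
        = Submodule.Quotient.mk (c p) := Eq.symm h
    rw [Submodule.Quotient.eq] at h'
    obtain ⟨k, hk⟩ := h'
    have hk' : (A₁ - A₂).mulVec k = c q - c p := hk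
    have h2 := rel_shift A₁ A₂ p (c p) k (hc p)
    rw [hk', add_sub_cancel] at h2
    exact Quotient.sound (rel_joined A₁ A₂ p q _ h2 (hc q))
  · intro a
    obtain ⟨a, rfl⟩ := Submodule.Quotient.mk_surjective _ a
    obtain ⟨p, hp⟩ := rel_surj A₁ A₂ a
    exact ⟨Quotient.mk _ p, mk_eq p a hp⟩
end

section
/- Let m ≥ n ≥ 1 and let A₁, A₂ be n×m integer matrices such that A₁−A₂ has rank n over ℚ. Then MCC(f_{A₁}, f_{A₂}) equals the (finite) index [ℤⁿ : (A₁−A₂)(ℤᵐ)] of the image of the ℤ-linear map ℤᵐ → ℤⁿ given by A₁−A₂. -/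
/-- The minimum number of coincidence components `MCC(f₁,f₂)`: the minimum, over all
pairs of maps homotopic to `f₁` and `f₂` respectively, of the number of path
components of the coincidence set (as an extended natural number). -/
noncomputable def MCC {X Y : Type} [TopologicalSpace X] [TopologicalSpace Y]
    (f₁ f₂ : C(X, Y)) : ℕ∞ :=
  ⨅ p : {q : C(X, Y) × C(X, Y) // f₁.Homotopic q.1 ∧ f₂.Homotopic q.2},
    ENat.card (ZerothHomotopy {x : X // (p : C(X, Y) × C(X, Y)).1 x = (p : C(X, Y) × C(X, Y)).2 x})

open MeasureTheory Metric Set Filter Topology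

theorem aux_interp (N : ℕ) (δ : ℝ) (hδ : 0 < δ) :
    ∃ (t c : Fin (N+1) → ℝ), (∀ i, 0 < t i ∧ t i < δ) ∧
      ∀ p : Polynomial ℝ, p.natDegree ≤ N → p.eval 1 = ∑ i, c i * p.eval (t i) := by
  let t : Fin (N+1) → ℝ := fun i => δ * ((i : ℝ) + 1) / (N + 2)
  have ht : Function.Injective t := by
    intro i j hij
    have h2 : (0 : ℝ) < N + 2 := by positivity
    simp only [t] at hij
    field_simp at hij
    have : (i : ℝ) = j := by linarith
    exact Fin.ext (by exact_mod_cast this)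
  refine ⟨t, fun i => (Lagrange.basis Finset.univ t i).eval 1, fun i => ⟨?_, ?_⟩, fun p hp => ?_⟩
  · positivity
  · have h2 : (0 : ℝ) < N + 2 := by positivity
    have : (i : ℝ) ≤ N := by exact_mod_cast Nat.lt_succ_iff.mp i.2
    simp only [t]
    rw [div_lt_iff₀ h2]
    nlinarith
  · have := Lagrange.eq_interpolate (s := Finset.univ) (v := t) (f := p) ht.injOn (by
      refine lt_of_le_of_lt Polynomial.degree_le_natDegree ?_
      simp
      exact_mod_cast Nat.lt_succ_of_le hp)
    conv_lhs => rw [this]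
    rw [Lagrange.interpolate_apply, Polynomial.eval_finsetSum]
    refine Finset.sum_congr rfl fun i _ => ?_
    simp [mul_comm]

theorem aux_detpoly {E : Type*} [NormedAddCommGroup E] [InnerProductSpace ℝ E]
    [FiniteDimensional ℝ E] (M : E →L[ℝ] E) :
    ∃ p : Polynomial ℝ, p.natDegree ≤ Module.finrank ℝ E ∧
      ∀ t : ℝ, p.eval t = (ContinuousLinearMap.id ℝ E + t • M).det := by
  let b := Module.finBasis ℝ E
  let A := LinearMap.toMatrix b b (M : E →ₗ[ℝ] E)
  refine ⟨Matrix.det ((Polynomial.X : Polynomial ℝ) • A.map Polynomial.C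
    + (1 : Matrix _ _ ℝ).map Polynomial.C), ?_, fun t => ?_⟩
  · simpa using Polynomial.natDegree_det_X_add_C_le A 1
  · have h0 : ∀ q : Polynomial ℝ, q.eval t = Polynomial.evalRingHom t q := fun q => rfl
    rw [h0, RingHom.map_det, ContinuousLinearMap.det, ← LinearMap.det_toMatrix b]
    congr 1
    ext i j
    simp [A, LinearMap.toMatrix_apply, Matrix.one_apply, Finsupp.single_apply,
      apply_ite, eq_comm, add_comm]
    exact mul_comm _ _

theorem aux_lip {E : Type*} [NormedAddCommGroup E] [InnerProductSpace ℝ E]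
    [FiniteDimensional ℝ E] (R : ℝ)
    (h : E → E) (hh : ContDiff ℝ 1 h) (hs : ∀ x, ‖x‖ = R → h x = 0) :
    ∃ K, LipschitzWith K (fun x => if ‖x‖ ≤ R then h x else 0) := by
  have hK : ∃ K, LipschitzOnWith K h (closedBall 0 R) := by
    obtain ⟨C, hC⟩ := (isCompact_closedBall (0:E) R).exists_bound_of_continuousOn
      (hh.continuous_fderiv one_ne_zero).continuousOn
    refine ⟨C.toNNReal, (convex_closedBall (0:E) R).lipschitzOnWith_of_nnnorm_fderiv_le
      (fun x _ => (hh.differentiable one_ne_zero) x) fun x hx => ?_⟩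
    rw [← NNReal.coe_le_coe]
    exact (hC x hx).trans (Real.le_coe_toNNReal _)
  obtain ⟨K, hK⟩ := hK
  refine ⟨K, LipschitzWith.of_dist_le_mul ?_⟩
  have key : ∀ x y : E, ‖x‖ ≤ R → ¬ ‖y‖ ≤ R → dist (h x) 0 ≤ K * dist x y := by
    intro x y hx hy
    push Not at hy
    obtain ⟨s, hs0, hs1⟩ : ∃ s ∈ Icc (0:ℝ) 1, ‖AffineMap.lineMap x y s‖ = R := by
      have := intermediate_value_Icc (zero_le_one' ℝ)
        (f := fun s : ℝ => ‖(AffineMap.lineMap x y s : E)‖)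
        (by apply Continuous.continuousOn; exact (AffineMap.lineMap_continuous).norm)
      have h2 := this (show R ∈ _ by simp [hx, hy.le])
      simpa using h2
    set z : E := AffineMap.lineMap x y s
    rw [← hs z hs1]
    refine (hK.dist_le_mul x (by simpa using hx) z (by simp [hs1])).trans ?_
    gcongr
    rw [dist_left_lineMap]
    have := hs0.2
    rw [Real.norm_of_nonneg hs0.1]
    nlinarith [dist_nonneg (x := x) (y := y)]
  intro x y
  by_cases hx : ‖x‖ ≤ R <;> by_cases hy : ‖y‖ ≤ R <;> simp only [hx, hy, if_true, if_false]
  · exact hK.dist_le_mul x (by simpa using hx) y (by simpa using hy)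
  · exact key x y hx hy
  · rw [dist_comm, dist_comm x]; exact key y x hy hx
  · simp; positivity

theorem aux_det0 {E : Type*} [NormedAddCommGroup E] [InnerProductSpace ℝ E]
    [FiniteDimensional ℝ E] (R : ℝ) (hR : 0 < R)
    (r : E → E) (hr : ContDiff ℝ 1 r) (hrn : ∀ x, ‖r x‖ = R) (x : E) :
    (fderiv ℝ r x).det = 0 := by
  by_contra hdet
  have hd : HasFDerivAt r (fderiv ℝ r x) x := ((hr.differentiable one_ne_zero) x).hasFDerivAt
  have h1 := hd.norm_sq
  have h2 : HasFDerivAt (fun x => ‖r x‖ ^ 2) (0 : E →L[ℝ] ℝ) x := by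
    simp only [hrn]; exact hasFDerivAt_const _ _
  have h3 := h1.unique h2
  let e := LinearMap.equivOfDetNeZero (fderiv ℝ r x : E →ₗ[ℝ] E) hdet
  have h4 := congrArg (fun L => L (e.symm (r x))) h3
  have h5 : (fderiv ℝ r x) (e.symm (r x)) = r x := e.apply_symm_apply (r x)
  simp [h5] at h4
  have := hrn x
  simp [h4] at this
  linarith

theorem aux_no_retract {E : Type*} [NormedAddCommGroup E] [InnerProductSpace ℝ E]
    [FiniteDimensional ℝ E] [MeasurableSpace E] [BorelSpace E]
    (R : ℝ) (hR : 0 < R) (r : E → E) (hr : ContDiff ℝ 1 r) (hrn : ∀ x, ‖r x‖ = R)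
    (hrs : ∀ x, ‖x‖ = R → r x = x) : False := by
  let μ : Measure E := volume
  have hg : ContDiff ℝ 1 (fun x => r x - x) := hr.sub contDiff_id
  obtain ⟨K, hK⟩ := aux_lip R (fun x => r x - x) hg (fun x hx => by simp [hrs x hx])
  set g : E → E := fun x => if ‖x‖ ≤ R then r x - x else 0 with hgdef
  let D : E → E →L[ℝ] E := fun x => fderiv ℝ r x - ContinuousLinearMap.id ℝ E
  have hDc : Continuous D := (hr.continuous_fderiv one_ne_zero).sub continuous_const
  let d : E → ℝ → ℝ := fun x t => (ContinuousLinearMap.id ℝ E + t • D x).det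
  have hdc : Continuous (fun p : E × ℝ => d p.1 p.2) := by
    apply ContinuousLinearMap.continuous_det.comp
    exact continuous_const.add (continuous_snd.smul (hDc.comp continuous_fst))
  have hpos : ∀ᶠ t in 𝓝 (0:ℝ), ∀ x ∈ closedBall (0:E) R, 0 < d x t := by
    apply (isCompact_closedBall (0:E) R).eventually_forall_of_forall_eventually
    intro x _
    have h0 : 0 < d x 0 := by simp [d, ContinuousLinearMap.det]
    have := (hdc.comp continuous_swap).continuousAt.eventually
      (lt_mem_nhds (show (0:ℝ) < ((fun p : E × ℝ => d p.1 p.2) ∘ Prod.swap) (0, x) from h0))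
    simpa using this
  have hsm : ∀ᶠ t in 𝓝 (0:ℝ), |t| * (K : ℝ) < 1 := by
    have : Continuous fun t : ℝ => |t| * (K : ℝ) := by fun_prop
    exact (this.tendsto 0).eventually (gt_mem_nhds (by simp))
  obtain ⟨δ, hδ, hball⟩ := Metric.eventually_nhds_iff.mp (hpos.and hsm)
  have hvol : ∀ t, 0 < t → t < δ → ∫ x in ball (0:E) R, d x t ∂μ = μ.real (ball (0:E) R) := by
    intro t ht0 htδ
    obtain ⟨hp, hs⟩ := hball (show dist t 0 < δ by simpa [abs_of_pos ht0] using htδ)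
    rw [abs_of_pos ht0] at hs
    let F : E → E := fun x => x + t • g x
    have hF : ApproximatesLinearOn F ((ContinuousLinearEquiv.refl ℝ E : E ≃L[ℝ] E) : E →L[ℝ] E)
        univ (t.toNNReal * K) := by
      intro x _ y _
      have := hK.dist_le_mul x y
      have e : F x - F y - ((ContinuousLinearEquiv.refl ℝ E : E ≃L[ℝ] E) : E →L[ℝ] E) (x - y)
          = t • (g x - g y) := by
        simp [F, smul_sub]; abel
      rw [e, norm_smul, Real.norm_of_nonneg ht0.le]
      rw [dist_eq_norm, dist_eq_norm] at this
      push_cast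
      rw [Real.coe_toNNReal _ ht0.le, mul_assoc]
      gcongr
    have hc : Subsingleton E ∨ t.toNNReal * K <
        ‖((ContinuousLinearEquiv.refl ℝ E : E ≃L[ℝ] E).symm : E →L[ℝ] E)‖₊⁻¹ := by
      rcases subsingleton_or_nontrivial E with h | h
      · exact Or.inl h
      · right
        have : ‖((ContinuousLinearEquiv.refl ℝ E : E ≃L[ℝ] E).symm : E →L[ℝ] E)‖₊ = 1 := by
          ext
          exact ContinuousLinearMap.norm_id
        rw [this, inv_one, ← NNReal.coe_lt_coe]
        push_cast
        rwa [Real.coe_toNNReal _ ht0.le]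
    have hinj : Function.Injective F := injOn_univ.mp (hF.injOn hc)
    have hsurj : Function.Surjective F := hF.surjective hc
    have hid : ∀ x, R ≤ ‖x‖ → F x = x := by
      intro x hx
      rcases hx.eq_or_lt with h | h
      · simp [F, g, hrs x h.symm]
      · simp [F, g, not_le.mpr h]
    have himg : F '' ball (0:E) R = ball (0:E) R := by
      have h1 : F '' (ball (0:E) R)ᶜ = (ball (0:E) R)ᶜ := by
        have : EqOn F id (ball (0:E) R)ᶜ := fun x hx => hid x (by simpa using hx)
        rw [this.image_eq, image_id]
      rw [← compl_inj_iff, ← image_compl_eq ⟨hinj, hsurj⟩, h1]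
    have hder : ∀ x ∈ ball (0:E) R, HasFDerivWithinAt F
        (ContinuousLinearMap.id ℝ E + t • D x) (ball (0:E) R) x := by
      intro x hx
      have h1 : HasFDerivAt (fun x => x + t • (r x - x)) (ContinuousLinearMap.id ℝ E + t • D x) x :=
        (hasFDerivAt_id x).add
          ((((hr.differentiable one_ne_zero) x).hasFDerivAt.sub (hasFDerivAt_id x)).const_smul t)
      refine HasFDerivWithinAt.congr' h1.hasFDerivWithinAt (fun y hy => ?_) hx
      have : ‖y‖ ≤ R := by simpa using (mem_ball.mp hy).le
      simp [F, g, this]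
    have := integral_image_eq_integral_abs_det_fderiv_smul μ measurableSet_ball hder hinj.injOn
      (fun _ => (1:ℝ))
    rw [himg] at this
    simp only [smul_eq_mul, mul_one, integral_const, MeasurableSet.univ, measureReal_restrict_apply, univ_inter] at this
    rw [this]
    refine setIntegral_congr_fun measurableSet_ball fun x hx => ?_
    exact (abs_of_pos (hp x (ball_subset_closedBall hx))).symm
  obtain ⟨t, c, ht, hp⟩ := aux_interp (Module.finrank ℝ E) δ hδ
  have hint : ∀ t, IntegrableOn (fun x => d x t) (ball (0:E) R) μ := by
    intro t
    have : Continuous fun x => d x t := hdc.comp (by fun_prop : Continuous fun x : E => (x, t))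
    exact (this.continuousOn.integrableOn_compact (isCompact_closedBall (0:E) R)).mono_set
      ball_subset_closedBall
  have hd1 : ∀ x, ∑ i, c i * d x (t i) = 0 := by
    intro x
    obtain ⟨p, hpd, hpe⟩ := aux_detpoly (D x)
    have := hp p hpd
    simp only [hpe] at this
    rw [← this]
    simpa [D] using aux_det0 R hR r hr hrn x
  have hc1 : ∑ i, c i = 1 := by simpa using (hp 1 (by simp)).symm
  have : ∫ x in ball (0:E) R, ∑ i, c i * d x (t i) ∂μ = μ.real (ball (0:E) R) := by
    rw [integral_finsetSum _ fun i _ => (hint (t i)).const_mul (c i)]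
    simp_rw [integral_const_mul]
    rw [Finset.sum_congr rfl fun i _ => by rw [hvol (t i) (ht i).1 (ht i).2], ← Finset.sum_mul,
      hc1, one_mul]
  simp only [hd1, integral_zero] at this
  have hpos : 0 < μ.real (ball (0:E) R) :=
    ENNReal.toReal_pos (measure_ball_pos μ 0 hR).ne' measure_ball_lt_top.ne
  linarith

/-- A bounded continuous self-map of a Euclidean space has a fixed point (Brouwer). -/
theorem aux_fixed {E : Type*} [NormedAddCommGroup E] [InnerProductSpace ℝ E]
    [FiniteDimensional ℝ E] [MeasurableSpace E] [BorelSpace E]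
    (b : E → E) (hb : Continuous b) (M : ℝ) (hM : ∀ x, ‖b x‖ ≤ M) : ∃ x, b x = x := by
  by_contra hne
  push Not at hne
  obtain ⟨f, hf, hfb, -⟩ := hb.exists_contDiff_approx (ε := fun x => min 1 ‖b x - x‖) 1
    (by fun_prop) (fun x => lt_min one_pos (norm_pos_iff.mpr (sub_ne_zero.mpr (hne x))))
  have hM0 : 0 ≤ M := (norm_nonneg _).trans (hM 0)
  have hfne : ∀ x, f x ≠ x := by
    intro x hx
    have := (hfb x).trans_le (min_le_right _ _)
    rw [hx, dist_comm, dist_eq_norm] at this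
    exact lt_irrefl _ this
  have hfM : ∀ x, ‖f x‖ < M + 1 := by
    intro x
    have := (hfb x).trans_le (min_le_left _ _)
    rw [dist_eq_norm] at this
    have h2 := norm_le_norm_add_norm_sub (b x) (f x)
    rw [norm_sub_rev] at h2
    linarith [hM x, norm_sub_rev (b x) (f x)]
  let χ : ContDiffBump (0:E) := ⟨M + 1, M + 2, by linarith, by linarith⟩
  let G : E → E := fun x => x - χ x • f x
  have hG : ContDiff ℝ 1 G := contDiff_id.sub (χ.contDiff.smul hf)
  have hG0 : ∀ x, G x ≠ 0 := by
    intro x hx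
    have h1 : x = χ x • f x := sub_eq_zero.mp hx
    have h2 : ‖x‖ ≤ M + 1 := by
      rw [h1, norm_smul, Real.norm_of_nonneg χ.nonneg]
      nlinarith [hfM x, χ.le_one (x := x), χ.nonneg (x := x), norm_nonneg (f x)]
    have h3 : χ x = 1 := χ.one_of_mem_closedBall (by simpa using h2)
    rw [h3, one_smul] at h1
    exact hfne x h1.symm
  refine aux_no_retract (M + 2) (by linarith) (fun x => ((M + 2) * ‖G x‖⁻¹) • G x) ?_ ?_ ?_
  · exact (contDiff_const.mul ((hG.norm ℝ hG0).inv fun x => norm_ne_zero_iff.mpr (hG0 x))).smul hG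
  · intro x
    have := norm_ne_zero_iff.mpr (hG0 x)
    rw [norm_smul, norm_mul, norm_inv, norm_norm, Real.norm_of_nonneg (by linarith)]
    field_simp
  · intro x hx
    have : χ x = 0 := χ.zero_of_le_dist (by simp [hx, χ])
    simp only [G, this, zero_smul, sub_zero, hx]
    rw [mul_inv_cancel₀ (by linarith), one_smul]

/-- The universal covering `ℝᵏ → Tᵏ`. -/
noncomputable def auxPi {k : ℕ} (X : Fin k → ℝ) : Torus k := fun i => (X i : AddCircle (1:ℝ))

theorem auxPi_continuous {k : ℕ} : Continuous (auxPi (k := k)) :=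
  continuous_pi fun i => (AddCircle.continuous_mk' 1).comp (continuous_apply i)

theorem auxPi_surj {k : ℕ} (x : Torus k) : ∃ X, auxPi X = x := by
  choose X hX using fun i => QuotientAddGroup.mk_surjective (x i)
  exact ⟨X, funext hX⟩

theorem auxPi_add_int {k : ℕ} (X : Fin k → ℝ) (z : Fin k → ℤ) :
    auxPi (fun i => X i + z i) = auxPi X := by
  funext i
  simp only [auxPi, AddCircle.coe_add]
  have : ((z i : ℝ) : AddCircle (1:ℝ)) = 0 := (AddCircle.coe_eq_zero_iff 1).mpr ⟨z i, by simp⟩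
  rw [this, add_zero]

theorem auxPi_eq {k : ℕ} (X Y : Fin k → ℝ) (h : auxPi X = auxPi Y) :
    ∃ z : Fin k → ℤ, ∀ i, X i = Y i + z i := by
  have : ∀ i, ∃ z : ℤ, X i = Y i + z := by
    intro i
    have h1 : ((X i - Y i : ℝ) : AddCircle (1:ℝ)) = 0 := by
      rw [AddCircle.coe_sub, sub_eq_zero]; exact congrFun h i
    obtain ⟨z, hz⟩ := (AddCircle.coe_eq_zero_iff 1).mp h1
    refine ⟨z, ?_⟩
    simp at hz
    linarith
  choose z hz using this
  exact ⟨z, hz⟩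

theorem aux_torusHom {m n : ℕ} (A : Matrix (Fin n) (Fin m) ℤ) (X : Fin m → ℝ) (j : Fin n) :
    torusHom A (auxPi X) j = ((∑ i, (A j i : ℝ) * X i : ℝ) : AddCircle (1:ℝ)) := by
  have h : ((∑ i, (A j i : ℝ) * X i : ℝ) : AddCircle (1:ℝ)) =
      ∑ i, (((A j i : ℝ) * X i : ℝ) : AddCircle (1:ℝ)) :=
    map_sum (QuotientAddGroup.mk' (AddSubgroup.zmultiples (1:ℝ)))
      (fun i => (A j i : ℝ) * X i) Finset.univ
  rw [h]
  show ∑ i, A j i • auxPi X i = _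
  refine Finset.sum_congr rfl fun i _ => ?_
  rw [← zsmul_eq_mul, AddCircle.coe_zsmul]
  rfl

theorem aux_torusHom_sub {m n : ℕ} (A₁ A₂ : Matrix (Fin n) (Fin m) ℤ) (x : Torus m) (j : Fin n) :
    torusHom A₁ x j - torusHom A₂ x j = torusHom (A₁ - A₂) x j := by
  show (∑ i, A₁ j i • x i) - (∑ i, A₂ j i • x i) = ∑ i, (A₁ - A₂) j i • x i
  refine (Finset.sum_sub_distrib _ _).symm.trans ?_
  refine Finset.sum_congr rfl fun i _ => ?_
  rw [Matrix.sub_apply, sub_smul]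

theorem aux_surjQ {m n : ℕ} (A : Matrix (Fin n) (Fin m) ℤ)
    (hrank : (A.map (Int.cast : ℤ → ℚ)).rank = n) :
    ∃ B : Matrix (Fin m) (Fin n) ℚ, A.map (Int.cast : ℤ → ℚ) * B = 1 := by
  rw [← Matrix.mulVec_surjective_iff_exists_right_inverse]
  have : LinearMap.range (A.map (Int.cast : ℤ → ℚ)).mulVecLin = ⊤ := by
    apply Submodule.eq_top_of_finrank_eq
    rw [Module.finrank_fin_fun]
    exact hrank
  exact LinearMap.range_eq_top.mp this

theorem aux_surjR {m n : ℕ} (A : Matrix (Fin n) (Fin m) ℤ)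
    (hrank : (A.map (Int.cast : ℤ → ℚ)).rank = n) :
    ∃ B : Matrix (Fin m) (Fin n) ℝ, ∀ (y : Fin n → ℝ) j,
      ∑ i, (A j i : ℝ) * (B.mulVec y) i = y j := by
  obtain ⟨B, hB⟩ := aux_surjQ A hrank
  refine ⟨B.map (Rat.cast : ℚ → ℝ), fun y j => ?_⟩
  have h1 : A.map (Int.cast : ℤ → ℝ) * B.map (Rat.cast : ℚ → ℝ) = 1 := by
    have := congrArg (fun M => M.map (Rat.castHom ℝ)) hB
    simp only [Matrix.map_mul, Matrix.map_map] at this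
    rw [Matrix.map_one _ (by simp) (by simp)] at this
    rw [← this]
    congr 1
  have h2 : (A.map (Int.cast : ℤ → ℝ)).mulVec ((B.map (Rat.cast : ℚ → ℝ)).mulVec y) = y := by
    rw [Matrix.mulVec_mulVec, h1, Matrix.one_mulVec]
  exact congrFun h2 j

theorem aux_finite {m n : ℕ} (A : Matrix (Fin n) (Fin m) ℤ)
    (hrank : (A.map (Int.cast : ℤ → ℚ)).rank = n) :
    Finite ((Fin n → ℤ) ⧸ LinearMap.range A.mulVecLin) := by
  obtain ⟨B, hB⟩ := aux_surjQ A hrank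
  apply Module.finite_of_fg_torsion
  intro q
  obtain ⟨v, rfl⟩ := Submodule.Quotient.mk_surjective _ q
  obtain ⟨b, hb⟩ := IsLocalization.exist_integer_multiples_of_finite (nonZeroDivisors ℤ)
    (B.mulVec (fun i => (v i : ℚ)))
  refine ⟨b, ?_⟩
  choose w hw using hb
  show (b : ℤ) • (Submodule.Quotient.mk v : (Fin n → ℤ) ⧸ LinearMap.range A.mulVecLin) = 0
  rw [← Submodule.Quotient.mk_smul, Submodule.Quotient.mk_eq_zero]
  refine ⟨w, ?_⟩
  have h2 : (A.map (Int.cast : ℤ → ℚ)).mulVec (B.mulVec (fun i => (v i : ℚ)))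
      = fun i => (v i : ℚ) := by
    rw [Matrix.mulVec_mulVec, hB, Matrix.one_mulVec]
  ext j
  have h3 := congrFun h2 j
  have : (((∑ i, A j i * w i : ℤ)) : ℚ) = (((b : ℤ) * v j : ℤ) : ℚ) := by
    push_cast
    rw [← h3]
    simp only [Matrix.mulVec, dotProduct, Finset.mul_sum, Matrix.map_apply] at hw ⊢
    refine Finset.sum_congr rfl fun i _ => ?_
    have := hw i
    simp only [eq_intCast, zsmul_eq_mul, Finset.mul_sum] at this
    rw [this]
    simp only [Finset.mul_sum]
    refine Finset.sum_congr rfl fun i _ => ?_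
    ring
  have h4 : (∑ i, A j i * w i : ℤ) = (b : ℤ) * v j := by exact_mod_cast this
  simpa [Matrix.mulVec, dotProduct] using h4

theorem aux_upper {m n : ℕ} (A₁ A₂ : Matrix (Fin n) (Fin m) ℤ)
    (hrank : ((A₁ - A₂).map (Int.cast : ℤ → ℚ)).rank = n) :
    ENat.card (ZerothHomotopy {x : Torus m // torusHom A₁ x = torusHom A₂ x}) ≤
      ENat.card ((Fin n → ℤ) ⧸ LinearMap.range (A₁ - A₂).mulVecLin) := by
  obtain ⟨B, hB⟩ := aux_surjR _ hrank
  set A := A₁ - A₂ with hA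
  have hmem : ∀ X : Fin m → ℝ, torusHom A₁ (auxPi X) = torusHom A₂ (auxPi X) ↔
      ∀ j, ∃ z : ℤ, ∑ i, (A j i : ℝ) * X i = z := by
    intro X
    rw [funext_iff]
    refine forall_congr' fun j => ?_
    rw [← sub_eq_zero, aux_torusHom_sub, aux_torusHom, AddCircle.coe_eq_zero_iff]
    refine exists_congr fun z => ?_
    rw [zsmul_eq_mul, mul_one]
    exact eq_comm
  let f : ((Fin n → ℤ) ⧸ LinearMap.range A.mulVecLin) →
      ZerothHomotopy {x : Torus m // torusHom A₁ x = torusHom A₂ x} := fun q =>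
    .mk ⟨auxPi (B.mulVec fun j => ((Quotient.out q) j : ℝ)),
      (hmem _).mpr fun j => ⟨Quotient.out q j, hB _ j⟩⟩
  have hf : Function.Surjective f := by
    intro c
    obtain ⟨⟨x, hx⟩, rfl⟩ := ZerothHomotopy.mk_surjective c
    obtain ⟨X, rfl⟩ := auxPi_surj x
    choose w hw using (hmem X).mp hx
    refine ⟨Submodule.Quotient.mk w, ?_⟩
    have hq : (Submodule.Quotient.mk (Quotient.out
        (Submodule.Quotient.mk w : (Fin n → ℤ) ⧸ LinearMap.range A.mulVecLin)) :
        (Fin n → ℤ) ⧸ LinearMap.range A.mulVecLin) = Submodule.Quotient.mk w :=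
      Quotient.out_eq _
    simp only [f]
    set v := Quotient.out
        (Submodule.Quotient.mk w : (Fin n → ℤ) ⧸ LinearMap.range A.mulVecLin)
    rw [Submodule.Quotient.eq] at hq
    obtain ⟨k, hk⟩ := hq
    have hk' : ∀ j, ∑ i, (A j i : ℝ) * (k i : ℝ) = v j - w j := by
      intro j
      have := congrFun hk j
      simp only [Matrix.mulVecLin_apply, Matrix.mulVec, dotProduct, Pi.sub_apply] at this
      exact_mod_cast this
    set Y := B.mulVec fun j => (v j : ℝ) with hY
    have hYj : ∀ j, ∑ i, (A j i : ℝ) * Y i = v j := fun j => hB _ j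
    let Z : unitInterval → Fin m → ℝ := fun t i => Y i + (t : ℝ) * (X i + k i - Y i)
    have hZ : ∀ t j, ∑ i, (A j i : ℝ) * Z t i = v j := by
      intro t j
      have : ∀ i, (A j i : ℝ) * Z t i = A j i * Y i + t * (A j i * X i + A j i * k i - A j i * Y i) :=
        fun i => by simp only [Z]; ring
      simp only [this, Finset.sum_add_distrib, ← Finset.mul_sum, Finset.sum_sub_distrib, hYj, hw, hk']
      ring
    have hZc : Continuous Z := by
      refine continuous_pi fun i => ?_
      simp only [Z]
      fun_prop
    refine ZerothHomotopy.sound ⟨⟨fun t => ⟨auxPi (Z t), (hmem _).mpr fun j => ⟨v j, hZ t j⟩⟩, ?_⟩, ?_, ?_⟩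
    · exact (auxPi_continuous.comp hZc).subtype_mk _
    · apply Subtype.ext
      show auxPi (Z 0) = auxPi Y
      congr 1
      funext i
      simp [Z]
    · apply Subtype.ext
      show auxPi (Z 1) = auxPi X
      rw [← auxPi_add_int X k]
      congr 1
      funext i
      simp [Z]
  exact ENat.card_le_card_of_injective (Function.injective_surjInv hf)

theorem aux_lift {m n : ℕ} (f₁ f₂ g₁ g₂ : C(Torus m, Torus n)) (h₁ : f₁.Homotopic g₁)
    (h₂ : f₂.Homotopic g₂) :
    ∃ h : Fin n → C(Torus m, ℝ), ∀ j x, ((h j x : ℝ) : AddCircle (1:ℝ)) =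
      g₁ x j - g₂ x j - (f₁ x j - f₂ x j) := by
  obtain ⟨F₁⟩ := h₁
  obtain ⟨F₂⟩ := h₂
  have : ∀ j, ∃ h : C(Torus m, ℝ), ∀ x, ((h x : ℝ) : AddCircle (1:ℝ)) =
      g₁ x j - g₂ x j - (f₁ x j - f₂ x j) := by
    intro j
    let H : C(unitInterval × Torus m, AddCircle (1:ℝ)) :=
      ⟨fun p => F₁ p j - F₂ p j - (f₁ p.2 j - f₂ p.2 j), by fun_prop⟩
    have H0 : ∀ a, H (0, a) = ((((0 : C(Torus m, ℝ)) a : ℝ)) : AddCircle (1:ℝ)) := by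
      intro a
      simp [H]
    let L := (AddCircle.isCoveringMap_coe (1:ℝ)).liftHomotopy H 0 H0
    refine ⟨⟨fun x => L (1, x), by fun_prop⟩, fun x => ?_⟩
    have := congrFun ((AddCircle.isCoveringMap_coe (1:ℝ)).liftHomotopy_lifts H 0 H0) (1, x)
    refine this.trans ?_
    simp [H]
  choose h hh using this
  exact ⟨h, hh⟩

theorem aux_lower {m n : ℕ} (A₁ A₂ : Matrix (Fin n) (Fin m) ℤ)
    (hrank : ((A₁ - A₂).map (Int.cast : ℤ → ℚ)).rank = n)
    (g₁ g₂ : C(Torus m, Torus n)) (h₁ : (torusHom A₁).Homotopic g₁)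
    (h₂ : (torusHom A₂).Homotopic g₂) :
    ENat.card ((Fin n → ℤ) ⧸ LinearMap.range (A₁ - A₂).mulVecLin) ≤
      ENat.card (ZerothHomotopy {x : Torus m // g₁ x = g₂ x}) := by
  obtain ⟨B, hB⟩ := aux_surjR _ hrank
  obtain ⟨h, hh⟩ := aux_lift _ _ _ _ h₁ h₂
  simp only [aux_torusHom_sub] at hh
  set A := A₁ - A₂ with hA
  let G : (Fin m → ℝ) → Fin n → ℝ := fun X j => ∑ i, (A j i : ℝ) * X i + h j (auxPi X)
  have hGc : ∀ j, Continuous fun X => G X j := by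
    intro j
    have := (h j).continuous.comp (auxPi_continuous (k := m))
    exact (by fun_prop : Continuous fun X : Fin m → ℝ => ∑ i, (A j i : ℝ) * X i).add this
  have hG : ∀ X j, ((G X j : ℝ) : AddCircle (1:ℝ)) = g₁ (auxPi X) j - g₂ (auxPi X) j := by
    intro X j
    simp only [G]
    rw [AddCircle.coe_add, hh, aux_torusHom]
    abel
  have hmem : ∀ X, g₁ (auxPi X) = g₂ (auxPi X) ↔ ∀ j, ∃ z : ℤ, (z : ℝ) = G X j := by
    intro X
    rw [funext_iff]
    refine forall_congr' fun j => ?_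
    rw [← sub_eq_zero, ← hG, AddCircle.coe_eq_zero_iff]
    simp
  have hsurj : ∀ v : Fin n → ℤ, ∃ X, ∀ j, G X j = v j := by
    intro v
    let b : EuclideanSpace ℝ (Fin n) → EuclideanSpace ℝ (Fin n) := fun y =>
      WithLp.toLp 2 fun j => (v j : ℝ) - h j (auxPi (B.mulVec y.ofLp))
    have hb : Continuous b := by
      refine (PiLp.continuous_toLp 2 _).comp (continuous_pi fun j => ?_)
      refine continuous_const.sub ((h j).continuous.comp (auxPi_continuous.comp ?_))
      exact (Continuous.matrix_mulVec continuous_const (PiLp.continuous_ofLp 2 _))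
    have hbd : ∃ M, ∀ y, ‖b y‖ ≤ M := by
      let c : Torus m → EuclideanSpace ℝ (Fin n) := fun x =>
        WithLp.toLp 2 fun j => (v j : ℝ) - h j x
      have hc : Continuous c := by
        refine (PiLp.continuous_toLp 2 _).comp (continuous_pi fun j => ?_)
        exact continuous_const.sub (h j).continuous
      obtain ⟨M, hM⟩ := (isCompact_univ (X := Torus m)).exists_bound_of_continuousOn hc.continuousOn
      exact ⟨M, fun y => hM _ (mem_univ _)⟩
    obtain ⟨M, hM⟩ := hbd
    obtain ⟨y, hy⟩ := aux_fixed b hb M hM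
    refine ⟨B.mulVec y.ofLp, fun j => ?_⟩
    have h1 : (v j : ℝ) - h j (auxPi (B.mulVec y.ofLp)) = y.ofLp j := congrFun (congrArg WithLp.ofLp hy) j
    simp only [G]
    rw [hB]
    linarith
  choose Y hY using hsurj
  let f : ((Fin n → ℤ) ⧸ LinearMap.range A.mulVecLin) →
      ZerothHomotopy {x : Torus m // g₁ x = g₂ x} := fun q =>
    .mk ⟨auxPi (Y (Quotient.out q)), (hmem _).mpr fun j => ⟨_, (hY _ j).symm⟩⟩
  refine ENat.card_le_card_of_injective (f := f) fun q q' hqq => ?_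
  obtain ⟨γ⟩ : Joined _ _ := Quotient.exact hqq
  rw [← Quotient.out_eq q, ← Quotient.out_eq q']
  set v := Quotient.out q
  set w := Quotient.out q'
  refine (Submodule.Quotient.eq _).mpr ?_
  -- lift the path
  have hlift : ∀ i, ∃ Γ : C(unitInterval, ℝ),
      (∀ t, ((Γ t : ℝ) : AddCircle (1:ℝ)) = (γ t).1 i) ∧ Γ 0 = Y v i := by
    intro i
    let γi : C(unitInterval, AddCircle (1:ℝ)) := ⟨fun t => (γ t).1 i,
      (continuous_apply i).comp (continuous_subtype_val.comp γ.continuous)⟩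
    have h0 : γi 0 = ((Y v i : ℝ) : AddCircle (1:ℝ)) := by
      simp [γi, auxPi]
    obtain ⟨Γ, hΓ, hΓ0⟩ := (AddCircle.isCoveringMap_coe (1:ℝ)).exists_path_lifts γi (Y v i) h0
    exact ⟨Γ, fun t => congrFun hΓ t, hΓ0⟩
  choose Γ hΓ hΓ0 using hlift
  let Z : unitInterval → Fin m → ℝ := fun t i => Γ i t
  have hZc : Continuous Z := continuous_pi fun i => (Γ i).continuous
  have hZπ : ∀ t, auxPi (Z t) = (γ t).1 := fun t => funext fun i => hΓ i t
  have hconst : ∀ j, G (Z 0) j = G (Z 1) j := by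
    intro j
    have : ∀ t, ∃ z : ℤ, (z : ℝ) = G (Z t) j := fun t =>
      (hmem (Z t)).mp (by rw [hZπ]; exact (γ t).2) j
    choose N hN using this
    have hNc : Continuous N := by
      rw [Int.isClosedEmbedding_coe_real.isInducing.continuous_iff]
      have : (Int.cast : ℤ → ℝ) ∘ N = fun t => G (Z t) j := funext hN
      rw [this]
      exact (hGc j).comp hZc
    rw [← hN, ← hN, PreconnectedSpace.constant inferInstance hNc (x := 0) (y := 1)]
  have hZ0 : Z 0 = Y v := funext hΓ0
  have hZ1 : auxPi (Z 1) = auxPi (Y w) := by rw [hZπ, γ.target]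
  obtain ⟨k, hk⟩ := auxPi_eq _ _ hZ1
  refine ⟨k, funext fun j => ?_⟩
  have h1 := hconst j
  rw [hZ0, hY] at h1
  have h2 := hY w j
  simp only [G] at h1 h2
  rw [hZ1] at h1
  simp only [hk, mul_add, Finset.sum_add_distrib] at h1
  have h3 : (∑ i, (A j i : ℝ) * (k i : ℝ)) = (v j : ℝ) - w j := by linarith
  have h4 : (∑ i, A j i * k i) = v j - w j := by exact_mod_cast h3
  simpa [Matrix.mulVec, dotProduct] using h4

theorem stmt5 (m n : ℕ) (hnm : n ≤ m) (hn : 1 ≤ n)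
    (A₁ A₂ : Matrix (Fin n) (Fin m) ℤ)
    (hrank : ((A₁ - A₂).map (Int.cast : ℤ → ℚ)).rank = n) :
    MCC (torusHom A₁) (torusHom A₂) =
      (Nat.card ((Fin n → ℤ) ⧸ LinearMap.range (A₁ - A₂).mulVecLin) : ℕ∞) := by
  have := aux_finite _ hrank
  rw [← ENat.card_eq_coe_natCard]
  apply le_antisymm
  · exact (iInf_le _ ⟨(torusHom A₁, torusHom A₂), ContinuousMap.Homotopic.refl _,
      ContinuousMap.Homotopic.refl _⟩).trans (aux_upper A₁ A₂ hrank)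
  · exact le_iInf fun p => aux_lower A₁ A₂ hrank _ _ p.2.1 p.2.2
end

section
/- Let m, n ≥ 1 and let A₁, A₂ be n×m integer matrices such that A₁−A₂ has rank strictly less than n over ℚ. Then the pair (f_{A₁}, f_{A₂}) of induced torus homomorphisms Tᵐ → Tⁿ is loose: there exist continuous maps f₁' homotopic to f_{A₁} and f₂' homotopic to f_{A₂} with f₁'(x) ≠ f₂'(x) for all x ∈ Tᵐ. -/
/-- A pair of maps is loose if it can be deformed to a coincidence free pair. -/
def Loose {X Y : Type} [TopologicalSpace X] [TopologicalSpace Y]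
    (f₁ f₂ : C(X, Y)) : Prop :=
  ∃ f₁' f₂' : C(X, Y), f₁.Homotopic f₁' ∧ f₂.Homotopic f₂' ∧ ∀ x, f₁' x ≠ f₂' x

theorem exists_int_left_kernel {m n : ℕ} (B : Matrix (Fin n) (Fin m) ℤ)
    (hrank : (B.map (Int.cast : ℤ → ℚ)).rank < n) :
    ∃ v : Fin n → ℤ, (∀ i, ∑ j, v j * B j i = 0) ∧ ∃ j, v j ≠ 0 := by
  have h1 : ¬ LinearIndependent ℚ (B.map (Int.cast : ℤ → ℚ)).row := by
    intro h
    have := h.rank_matrix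
    simp at this
    omega
  rw [← LinearIndependent.iff_fractionRing ℤ ℚ, Fintype.not_linearIndependent_iff] at h1
  obtain ⟨v, hv, hj⟩ := h1
  refine ⟨v, fun i => ?_, hj⟩
  have := congrFun hv i
  rw [Finset.sum_apply] at this
  have h2 : ∑ j, (v j : ℚ) * (B j i : ℚ) = 0 := by
    refine Eq.trans (Finset.sum_congr rfl fun j _ => ?_) this
    rw [Pi.smul_apply, zsmul_eq_mul]
    rfl
  exact_mod_cast h2

theorem half_ne_zero_circle : ((1 / 2 : ℝ) : AddCircle (1 : ℝ)) ≠ 0 := by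
  intro h
  rw [AddCircle.coe_eq_zero_iff] at h
  obtain ⟨k, hk⟩ := h
  have h2 : (2 * k : ℝ) = 1 := by
    simp at hk
    linarith
  have h3 : 2 * k = 1 := by exact_mod_cast h2
  omega

theorem stmt6 (m n : ℕ) (hm : 1 ≤ m) (hn : 1 ≤ n)
    (A₁ A₂ : Matrix (Fin n) (Fin m) ℤ)
    (hrank : ((A₁ - A₂).map (Int.cast : ℤ → ℚ)).rank < n) :
    Loose (torusHom A₁) (torusHom A₂) := by
  obtain ⟨v, hv, k, hk⟩ := exists_int_left_kernel _ hrank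
  let r : ℝ := 1 / (2 * v k)
  let c : ℝ → Torus n := fun t => Pi.single k ((t * r : ℝ) : AddCircle (1 : ℝ))
  have hc : Continuous c := by
    refine (continuous_single k).comp ?_
    exact (AddCircle.continuous_mk' 1).comp (by fun_prop)
  refine ⟨⟨fun x => torusHom A₁ x + c 1, by fun_prop⟩, torusHom A₂, ⟨?_⟩,
    ContinuousMap.Homotopic.refl _, ?_⟩
  · exact
      { toFun := fun p => torusHom A₁ p.2 + c (p.1 : ℝ)
        continuous_toFun := by fun_prop
        map_zero_left := fun x => by simp [c]
        map_one_left := fun x => by simp }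
  · intro x hx
    have h1 : ∀ j, ∑ i, (A₁ - A₂) j i • x i + c 1 j = 0 := by
      intro j
      have : ∑ i, A₁ j i • x i + c 1 j = ∑ i, A₂ j i • x i := congrFun hx j
      simp only [Matrix.sub_apply, sub_smul, Finset.sum_sub_distrib]
      rw [← this]
      abel
    have h2 : ∑ j, v j • (∑ i, (A₁ - A₂) j i • x i + c 1 j) = 0 :=
      Finset.sum_eq_zero fun j _ => by rw [h1, smul_zero]
    have h3 : ∑ j, v j • ∑ i, (A₁ - A₂) j i • x i = 0 := by
      simp only [Finset.smul_sum, smul_smul]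
      rw [Finset.sum_comm]
      simp only [← Finset.sum_smul, hv, zero_smul, Finset.sum_const_zero]
    have h4 : ∑ j, v j • c 1 j = ((1 / 2 : ℝ) : AddCircle (1 : ℝ)) := by
      rw [Finset.sum_eq_single k]
      · simp only [c, Pi.single_eq_same]
        rw [← AddCircle.coe_zsmul]
        congr 1
        have : (v k : ℝ) ≠ 0 := by exact_mod_cast hk
        simp only [r, zsmul_eq_mul]
        field_simp
      · intro j _ hj
        simp [c, Pi.single_eq_of_ne hj]
      · simp
    simp only [smul_add, Finset.sum_add_distrib] at h2
    rw [h3, h4, zero_add] at h2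
    exact half_ne_zero_circle h2
end

section
/- Let n ≥ 1 and let A₁, A₂ be n×n integer matrices with det(A₁−A₂) ≠ 0. Then MC(f_{A₁}, f_{A₂}) = |det(A₁−A₂)|: there exist continuous maps f₁' homotopic to f_{A₁} and f₂' homotopic to f_{A₂} whose coincidence set {x ∈ Tⁿ : f₁'(x) = f₂'(x)} has exactly |det(A₁−A₂)| elements, and no pair of maps homotopic to f_{A₁}, f_{A₂} respectively has a coincidence set of smaller cardinality. -/
open MeasureTheory Set Filter Topology

/-- integer vectors as real vectors -/
def zv {n : ℕ} (m : Fin n → ℤ) : Fin n → ℝ := fun i => (m i : ℝ)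

/-- `ℤⁿ`-periodic functions -/
def Per {n : ℕ} {F : Type*} (f : (Fin n → ℝ) → F) : Prop := ∀ (m : Fin n → ℤ) x, f (x + zv m) = f x

lemma Per.exists_cube {n : ℕ} {F : Type*} {f : (Fin n → ℝ) → F} (hf : Per f) (x : Fin n → ℝ) :
    ∃ m : Fin n → ℤ, x + zv m ∈ Icc (0 : Fin n → ℝ) 1 ∧ f (x + zv m) = f x := by
  refine ⟨fun i => - ⌊x i⌋, ⟨fun i => ?_, fun i => ?_⟩, hf _ _⟩
  · simp only [zv, Pi.add_apply, Pi.zero_apply, Int.cast_neg]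
    linarith [Int.floor_le (x i)]
  · simp only [zv, Pi.add_apply, Pi.one_apply, Int.cast_neg]
    linarith [Int.lt_floor_add_one (x i)]

lemma det_interp (n : ℕ) (t : Fin (n+1) → ℝ) (ht : Function.Injective t) :
    ∃ w : Fin (n+1) → ℝ, ∑ j, w j = 1 ∧ ∀ L : (Fin n → ℝ) →L[ℝ] (Fin n → ℝ),
      (1 + L).det = ∑ j, w j * (1 + t j • L).det := by
  refine ⟨fun j => (Lagrange.basis Finset.univ t j).eval 1, ?_, fun L => ?_⟩
  · rw [← Polynomial.eval_finsetSum, Lagrange.sum_basis (ht.injOn) Finset.univ_nonempty]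
    simp
  · set M := LinearMap.toMatrix' (L : (Fin n → ℝ) →ₗ[ℝ] (Fin n → ℝ)) with hM
    have key : ∀ s : ℝ, (1 + s • L).det = (Polynomial.eval s (Matrix.det
        ((Polynomial.X : Polynomial ℝ) • M.map Polynomial.C +
          (1 : Matrix (Fin n) (Fin n) ℝ).map Polynomial.C))) := by
      intro s
      rw [← Polynomial.coe_evalRingHom, RingHom.map_det, ContinuousLinearMap.det,
        ← LinearMap.det_toMatrix']
      congr 1
      ext i j
      by_cases hij : i = j
      · subst hij
        simp [hM, LinearMap.toMatrix'_apply]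
        ring
      · simp [hM, LinearMap.toMatrix'_apply, hij]
        ring
    have h1 := key 1
    rw [one_smul] at h1
    rw [h1, Lagrange.eq_interpolate (s := Finset.univ) (v := t) (f := Matrix.det _) ht.injOn
      (by
        refine (Polynomial.degree_le_natDegree).trans_lt ?_
        have := Polynomial.natDegree_det_X_add_C_le M 1
        simp only [Fintype.card_fin] at this
        rw [Finset.card_univ, Fintype.card_fin]
        exact_mod_cast Nat.lt_succ_of_le this), Lagrange.interpolate_apply, Polynomial.eval_finsetSum]
    refine Finset.sum_congr rfl fun j _ => ?_
    rw [key (t j)]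
    simp [mul_comm]

lemma zv_mem {n : ℕ} (v : Fin n → ℝ) : v ∈ Submodule.span ℤ (range (Pi.basisFun ℝ (Fin n))) ↔
    ∃ m : Fin n → ℤ, v = zv m := by
  rw [Module.Basis.mem_span_iff_repr_mem]
  simp only [Pi.basisFun_repr, mem_range, algebraMap_int_eq, eq_intCast]
  constructor
  · intro h
    choose m hm using h
    exact ⟨m, funext fun i => (hm i).symm⟩
  · rintro ⟨m, rfl⟩ i
    exact ⟨m i, rfl⟩

/-- the unit cube -/
noncomputable abbrev cube (n : ℕ) : Set (Fin n → ℝ) := ZSpan.fundamentalDomain (Pi.basisFun ℝ (Fin n))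

lemma volume_cube (n : ℕ) : volume (cube n) = 1 := by
  rw [cube, ZSpan.fundamentalDomain_pi_basisFun, volume_pi, Measure.pi_pi]
  simp

lemma volume_image {n : ℕ} (G : (Fin n → ℝ) → (Fin n → ℝ)) (hc : Continuous G)
    (hb : Function.Bijective G) (he : ∀ m x, G (x + zv m) = G x + zv m) :
    volume (G '' cube n) = 1 := by
  have hm : MeasurableSet (cube n) := ZSpan.fundamentalDomain_measurableSet _
  have h1 := ZSpan.isAddFundamentalDomain (Pi.basisFun ℝ (Fin n)) volume
  have h2 : IsAddFundamentalDomain (Submodule.span ℤ (range (Pi.basisFun ℝ (Fin n))))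
      (G '' cube n) volume := by
    refine IsAddFundamentalDomain.mk' (hm.image_of_continuousOn_injOn hc.continuousOn hb.1.injOn).nullMeasurableSet fun y => ?_
    obtain ⟨x, rfl⟩ := hb.2 y
    have hx := ZSpan.exist_unique_vadd_mem_fundamentalDomain (Pi.basisFun ℝ (Fin n)) x
    have : ∀ v : Submodule.span ℤ (range (Pi.basisFun ℝ (Fin n))), v +ᵥ G x ∈ G '' cube n ↔ v +ᵥ x ∈ cube n := by
      rintro ⟨v, hv⟩
      obtain ⟨m, rfl⟩ := (zv_mem v).1 hv
      simp only [Submodule.vadd_def, vadd_eq_add]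
      rw [add_comm _ (G x), ← he, hb.1.mem_set_image, add_comm]
    simpa only [this] using hx
  have : VAddInvariantMeasure (Submodule.span ℤ (range (Pi.basisFun ℝ (Fin n)))) (Fin n → ℝ) volume :=
    inferInstanceAs <| VAddInvariantMeasure (Submodule.span ℤ (range (Pi.basisFun ℝ (Fin n)))).toAddSubgroup (Fin n → ℝ) volume
  rw [← h1.measure_eq h2, volume_cube]

lemma Per.fderiv {n : ℕ} {ψ : (Fin n → ℝ) → (Fin n → ℝ)} (hp : Per ψ) : Per (fderiv ℝ ψ) := by
  intro m x
  rw [← fderiv_comp_add_right]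
  congr 1
  exact funext (hp m)

lemma Per.bdd {n : ℕ} {F : Type*} [NormedAddCommGroup F] {f : (Fin n → ℝ) → F} (hf : Per f)
    (hc : Continuous f) : ∃ C : ℝ, 0 < C ∧ ∀ x, ‖f x‖ ≤ C := by
  obtain ⟨C, hC⟩ := (isCompact_Icc (a := (0 : Fin n → ℝ)) (b := 1)).exists_bound_of_continuousOn hc.continuousOn
  refine ⟨max C 1, by positivity, fun x => ?_⟩
  obtain ⟨m, hm, h⟩ := hf.exists_cube x
  rw [← h]
  exact (hC _ hm).trans (le_max_left _ _)

lemma integral_small {n : ℕ} {ψ : (Fin n → ℝ) → (Fin n → ℝ)} (hs : ContDiff ℝ 1 ψ) (hp : Per ψ) :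
    ∃ r > 0, ∀ t : ℝ, 0 < t → t < r → ∫ x in cube n, (1 + t • fderiv ℝ ψ x).det = 1 := by
  have hcd : Continuous (fderiv ℝ ψ) := hs.continuous_fderiv one_ne_zero
  obtain ⟨C, hC0, hC⟩ := hp.fderiv.bdd hcd
  have hopen : IsOpen {L : (Fin n → ℝ) →L[ℝ] (Fin n → ℝ) | 0 < (1 + L).det} :=
    isOpen_lt continuous_const (ContinuousLinearMap.continuous_det.comp (continuous_const.add continuous_id))
  have h0 : (0 : (Fin n → ℝ) →L[ℝ] (Fin n → ℝ)) ∈ {L : (Fin n → ℝ) →L[ℝ] (Fin n → ℝ) | 0 < (1 + L).det} := by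
    simp [ContinuousLinearMap.det]
  obtain ⟨ρ, hρ, hball⟩ := Metric.isOpen_iff.1 hopen 0 h0
  refine ⟨min (ρ / C) (1 / C), by positivity, fun t ht htr => ?_⟩
  have ht1 : t * C < ρ := by
    have := htr.trans_le (min_le_left _ _)
    rwa [lt_div_iff₀ hC0] at this
  have ht2 : t * C < 1 := by
    have := htr.trans_le (min_le_right _ _)
    rwa [lt_div_iff₀ hC0] at this
  have hnorm : ∀ x, ‖t • fderiv ℝ ψ x‖ ≤ t * C := fun x => by
    rw [norm_smul, Real.norm_of_nonneg ht.le]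
    exact mul_le_mul_of_nonneg_left (hC x) ht.le
  have hpos : ∀ x, 0 < (1 + t • fderiv ℝ ψ x).det := fun x => by
    refine hball ?_
    rw [mem_ball_zero_iff]
    exact (hnorm x).trans_lt ht1
  have hd : Differentiable ℝ ψ := hs.differentiable one_ne_zero
  have hlip : LipschitzWith (Real.toNNReal (t * C)) (fun x => t • ψ x) := by
    refine lipschitzWith_of_nnnorm_fderiv_le (𝕜 := ℝ) (hd.const_smul t) fun x => ?_
    rw [fderiv_fun_const_smul (hd x), ← NNReal.coe_le_coe, coe_nnnorm, Real.coe_toNNReal _ (by positivity)]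
    exact hnorm x
  set G : (Fin n → ℝ) → (Fin n → ℝ) := fun x => x + t • ψ x with hG
  have hK : (Real.toNNReal (t * C)) < 1 := by simpa using ht2
  have hb : Function.Bijective G := by
    constructor
    · intro x y hxy
      have h1 : dist x y ≤ (Real.toNNReal (t * C)) * dist x y := by
        have := hlip.dist_le_mul x y
        have h2 : x - y = t • ψ y - t • ψ x := by
          simp only [hG] at hxy
          linear_combination hxy
        rwa [dist_comm, dist_eq_norm, ← h2, ← dist_eq_norm] at this
      rw [Real.coe_toNNReal _ (by positivity)] at h1
      have : dist x y ≤ 0 := by nlinarith [dist_nonneg (x := x) (y := y)]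
      exact dist_le_zero.1 this
    · intro y
      have hcon : ContractingWith (Real.toNNReal (t * C)) (fun x => y - t • ψ x) := by
        refine ⟨hK, LipschitzWith.of_dist_le_mul fun a b => ?_⟩
        rw [dist_sub_left]
        exact hlip.dist_le_mul a b
      refine ⟨ContractingWith.fixedPoint _ hcon, ?_⟩
      have := hcon.fixedPoint_isFixedPt
      simp only [Function.IsFixedPt] at this
      simp only [hG]
      nth_rewrite 1 [← this]
      simp
  have hGc : Continuous G := continuous_id.add (hs.continuous.const_smul t)
  have hvol := volume_image G hGc hb (fun m x => by simp only [hG, hp m x]; abel)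
  have hder : ∀ x ∈ cube n, HasFDerivWithinAt G (1 + t • fderiv ℝ ψ x) (cube n) x := fun x _ =>
    ((hasFDerivAt_id x).add ((hd x).hasFDerivAt.const_smul t)).hasFDerivWithinAt
  have hm : MeasurableSet (cube n) := ZSpan.fundamentalDomain_measurableSet _
  have key := lintegral_abs_det_fderiv_eq_addHaar_image volume hm hder hb.1.injOn
  rw [hvol] at key
  rw [integral_eq_lintegral_of_nonneg_ae (Eventually.of_forall fun x => (hpos x).le)]
  · simp only [abs_of_pos (hpos _)] at key
    rw [key]; simp
  · exact (ContinuousLinearMap.continuous_det.comp (continuous_const.add (hcd.const_smul t))).aestronglyMeasurable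

lemma integral_det {n : ℕ} {ψ : (Fin n → ℝ) → (Fin n → ℝ)} (hs : ContDiff ℝ 1 ψ) (hp : Per ψ) :
    ∫ x in cube n, (1 + fderiv ℝ ψ x).det = 1 := by
  obtain ⟨r, hr, h⟩ := integral_small hs hp
  have hcd : Continuous (fderiv ℝ ψ) := hs.continuous_fderiv one_ne_zero
  obtain ⟨w, hw, hdet⟩ := det_interp n (fun j => r / (j + 2)) (by
    intro i j hij
    simp only at hij
    have : (i : ℝ) = j := by
      field_simp at hij
      linarith
    exact Fin.ext (by exact_mod_cast this))
  rw [integral_congr_ae (Eventually.of_forall fun x => hdet (fderiv ℝ ψ x))]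
  rw [integral_finsetSum]
  · rw [← hw]
    refine Finset.sum_congr rfl fun j _ => ?_
    rw [integral_const_mul, h _ (by positivity) (by
      rw [div_lt_iff₀ (by positivity)]
      have : (0:ℝ) ≤ (j : ℝ) := by positivity
      nlinarith), mul_one]
  · intro j _
    have hc : Continuous fun x => w j * (1 + (r / ((j : ℝ) + 2)) • fderiv ℝ ψ x).det :=
      continuous_const.mul (ContinuousLinearMap.continuous_det.comp (continuous_const.add (hcd.const_smul (r / ((j : ℝ) + 2)))))
    refine ((hc.continuousOn (s := Icc (0 : Fin n → ℝ) 1)).integrableOn_compact isCompact_Icc).mono_set ?_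
    rw [cube, ZSpan.fundamentalDomain_pi_basisFun]
    intro x hx
    exact ⟨fun i => (hx i trivial).1, fun i => (hx i trivial).2.le⟩

lemma exists_eta (b : ℝ) (hb : 0 < b) : ∃ η : ℝ → ℝ, ContDiff ℝ 1 η ∧ (∀ x (m : ℤ), η (x + m) = η x + m) ∧
    ∀ x, Real.cos (2 * Real.pi * x) ≤ 1 - b → HasDerivAt η 0 x := by
  set p : ℝ → ℝ := fun u => max 0 (Real.cos (2 * Real.pi * u) - (1 - b)) with hp
  have hpc : Continuous p := by fun_prop
  have hper : Function.Periodic p 1 := by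
    intro x
    simp only [hp]
    rw [mul_add, mul_one, Real.cos_add_two_pi]
  have hpi : ∀ a c, IntervalIntegrable p volume a c := fun a c => hpc.intervalIntegrable a c
  set c := ∫ u in (0:ℝ)..1, p u with hcdef
  have hc : 0 < c := by
    refine intervalIntegral.integral_pos one_pos hpc.continuousOn (fun x _ => le_max_left _ _) ⟨0, by simp, ?_⟩
    simp [hp, hb]
  have hder : ∀ x, HasDerivAt (fun x => c⁻¹ * ∫ u in (0:ℝ)..x, p u) (c⁻¹ * p x) x := fun x =>
    (intervalIntegral.integral_hasDerivAt_right (hpi _ _) hpc.stronglyMeasurable.stronglyMeasurableAtFilter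
      hpc.continuousAt).const_mul _
  refine ⟨fun x => c⁻¹ * ∫ u in (0:ℝ)..x, p u, ?_, ?_, ?_⟩
  · rw [contDiff_one_iff_deriv]
    refine ⟨fun x => (hder x).differentiableAt, ?_⟩
    rw [funext fun x => (hder x).deriv]
    exact continuous_const.mul hpc
  · intro x m
    have h1 : ∫ u in (0:ℝ)..(x + m), p u = (∫ u in (0:ℝ)..x, p u) + ∫ u in x..(x+m), p u :=
      (intervalIntegral.integral_add_adjacent_intervals (hpi _ _) (hpi _ _)).symm
    have h2 := hper.intervalIntegral_add_zsmul_eq m x hpi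
    simp only [zsmul_eq_mul, mul_one] at h2
    simp only [h1, h2]
    rw [hper.intervalIntegral_add_eq x 0, zero_add, ← hcdef]
    field_simp
  · intro x hx
    have := hder x
    have h0 : p x = 0 := by
      simp only [hp]
      exact max_eq_left (by linarith)
    rwa [h0, mul_zero] at this

lemma no_smooth {n : ℕ} {ψ : (Fin n → ℝ) → (Fin n → ℝ)} (hs : ContDiff ℝ 1 ψ) (hp : Per ψ)
    (b : ℝ) (hb : 0 < b) (h : ∀ x, ∃ i, Real.cos (2 * Real.pi * (x i + ψ x i)) ≤ 1 - b) : False := by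
  obtain ⟨η, hη, hηz, hη0⟩ := exists_eta b hb
  set Q : (Fin n → ℝ) → (Fin n → ℝ) := fun x i => η (x i + ψ x i) with hQ
  have hQs : ContDiff ℝ 1 Q := by
    rw [contDiff_pi]
    intro i
    have h1 : ContDiff ℝ 1 fun x : Fin n → ℝ => x i := contDiff_apply _ _ i
    have h2 : ContDiff ℝ 1 fun x : Fin n → ℝ => ψ x i := contDiff_pi.1 hs i
    exact hη.comp (h1.add h2)
  have hψ' : ContDiff ℝ 1 (fun x => Q x - x) := hQs.sub contDiff_id
  have hper : Per (fun x => Q x - x) := by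
    intro m x
    funext i
    simp only [hQ, Pi.sub_apply, Pi.add_apply, hp m x, zv]
    rw [add_right_comm, hηz]
    ring
  have key := integral_det hψ' hper
  have hd : Differentiable ℝ Q := hQs.differentiable one_ne_zero
  have hz : ∀ x, (1 + fderiv ℝ (fun x => Q x - x) x).det = 0 := by
    intro x
    have h1 : 1 + fderiv ℝ (fun x => Q x - x) x = fderiv ℝ Q x := by
      have := ((hd x).hasFDerivAt.sub (hasFDerivAt_id x)).fderiv
      have e : fderiv ℝ (fun x => Q x - x) x = fderiv ℝ Q x - ContinuousLinearMap.id ℝ _ := this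
      rw [e, ContinuousLinearMap.one_def]
      abel
    rw [h1]
    obtain ⟨i, hi⟩ := h x
    have h3 : HasFDerivAt (fun x => Q x i) (0 : (Fin n → ℝ) →L[ℝ] ℝ) x := by
      have hg : DifferentiableAt ℝ (fun x : Fin n → ℝ => x i + ψ x i) x := by
        have h1 : ContDiff ℝ 1 fun x : Fin n → ℝ => x i := contDiff_apply _ _ i
        have h2 : ContDiff ℝ 1 fun x : Fin n → ℝ => ψ x i := contDiff_pi.1 hs i
        exact (h1.add h2).differentiable one_ne_zero x
      have := (hη0 _ hi).comp_hasFDerivAt x hg.hasFDerivAt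
      rw [zero_smul] at this
      exact this
    have h4 := (hasFDerivAt_pi'.1 (hd x).hasFDerivAt i).unique h3
    by_contra hne
    have hne' : LinearMap.det (fderiv ℝ Q x : (Fin n → ℝ) →ₗ[ℝ] (Fin n → ℝ)) ≠ 0 := hne
    obtain ⟨v, hv⟩ := (LinearMap.equivOfDetNeZero _ hne').surjective (Pi.single i 1)
    have h5 : fderiv ℝ Q x v = Pi.single i 1 := hv
    have h6 := congrArg (fun L => L v) h4
    have h7 : fderiv ℝ Q x v i = 0 := by simpa using h6
    rw [h5] at h7
    simp at h7
  simp [hz] at key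

lemma exists_smooth {n : ℕ} {ψ : (Fin n → ℝ) → (Fin n → ℝ)} (hc : Continuous ψ) (hp : Per ψ)
    (ε : ℝ) (hε : 0 < ε) : ∃ φ : (Fin n → ℝ) → (Fin n → ℝ), ContDiff ℝ 1 φ ∧ Per φ ∧ ∀ x, dist (φ x) (ψ x) ≤ ε := by
  have hu := (isCompact_Icc (a := (0 : Fin n → ℝ)) (b := 1)).uniformContinuousAt_of_continuousAt ψ
    (fun a _ => hc.continuousAt) (Metric.dist_mem_uniformity hε)
  obtain ⟨δ, hδ, hu⟩ := Metric.mem_uniformity_dist.1 hu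
  let B : ContDiffBump (0 : Fin n → ℝ) := ⟨δ / 2, δ, by positivity, by linarith⟩
  refine ⟨convolution (B.normed volume) ψ (ContinuousLinearMap.lsmul ℝ ℝ) volume, ?_, ?_, ?_⟩
  · exact B.hasCompactSupport_normed.contDiff_convolution_left (n := 1) _ B.contDiff_normed hc.locallyIntegrable
  · intro m x
    simp only [convolution_def]
    congr 1
    funext t
    rw [show x + zv m - t = (x - t) + zv m by abel, hp]
  · intro x
    refine ContDiffBump.dist_normed_convolution_le hc.aestronglyMeasurable fun y hy => ?_
    obtain ⟨m, hm, h⟩ := hp.exists_cube x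
    have hy' : dist (x + zv m) (y + zv m) < δ := by
      rw [dist_add_right, dist_comm]
      exact hy
    have := hu hy' hm
    simp only [mem_ofPred_eq] at this
    rw [h, hp, dist_comm] at this
    exact this.le

lemma exists_int_point {n : ℕ} {ψ : (Fin n → ℝ) → (Fin n → ℝ)} (hc : Continuous ψ) (hp : Per ψ) :
    ∃ x, x + ψ x = 0 := by
  suffices H : ∃ x, ∀ i, Real.cos (2 * Real.pi * (x i + ψ x i)) = 1 by
    obtain ⟨x, hx⟩ := H
    have : ∀ i, ∃ m : ℤ, x i + ψ x i = m := fun i => by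
      obtain ⟨m, hm⟩ := (Real.cos_eq_one_iff _).1 (hx i)
      refine ⟨m, ?_⟩
      have := Real.pi_pos
      have h2 : 2 * Real.pi * (x i + ψ x i - m) = 0 := by linear_combination -hm
      have h3 := (mul_eq_zero.1 h2).resolve_left (by positivity)
      linarith
    choose m hm using this
    refine ⟨x + zv (-m), ?_⟩
    rw [hp]
    funext i
    simp only [Pi.add_apply, zv, Pi.neg_apply, Int.cast_neg, Pi.zero_apply]
    linarith [hm i]
  by_contra! hne
  set S : (Fin n → ℝ) → ℝ := fun x => ∑ i, (1 - Real.cos (2 * Real.pi * (x i + ψ x i))) with hS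
  have hSc : Continuous S := by
    have : ∀ i, Continuous fun x => ψ x i := fun i => (continuous_apply i).comp hc
    fun_prop
  have hSpos : ∀ x, 0 < S x := by
    intro x
    obtain ⟨i, hi⟩ := hne x
    refine Finset.sum_pos' (fun j _ => by linarith [Real.cos_le_one (2 * Real.pi * (x j + ψ x j))]) ⟨i, Finset.mem_univ _, ?_⟩
    linarith [lt_of_le_of_ne (Real.cos_le_one (2 * Real.pi * (x i + ψ x i))) hi]
  have hSp : Per S := by
    intro m x
    simp only [hS, hp m x]
    refine Finset.sum_congr rfl fun i _ => ?_
    rw [show 2 * Real.pi * ((x + zv m) i + ψ x i) = 2 * Real.pi * (x i + ψ x i) + m i * (2 * Real.pi) by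
      simp only [Pi.add_apply, zv]; ring, Real.cos_add_int_mul_two_pi]
  obtain ⟨x₀, -, hx₀⟩ := (isCompact_Icc (a := (0 : Fin n → ℝ)) (b := 1)).exists_isMinOn ⟨0, by simp⟩ hSc.continuousOn
  set c := S x₀ with hcdef
  have hc0 : 0 < c := hSpos x₀
  have hmin : ∀ x, c ≤ S x := fun x => by
    obtain ⟨m, hm, h⟩ := hSp.exists_cube x
    rw [← h]
    exact hx₀ hm
  set d := c / (n + 1) with hd
  have hd0 : 0 < d := by positivity
  have hex : ∀ x, ∃ i, d ≤ 1 - Real.cos (2 * Real.pi * (x i + ψ x i)) := by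
    intro x
    by_contra! hlt
    have h1 : S x ≤ ∑ i : Fin n, d := Finset.sum_le_sum fun i _ => (hlt i).le
    simp only [Finset.sum_const, Finset.card_univ, Fintype.card_fin, nsmul_eq_mul] at h1
    have h2 : (n + 1) * d = c := by rw [hd]; field_simp
    linarith [hmin x]
  have hpi := Real.pi_pos
  obtain ⟨φ, hφs, hφp, hφ⟩ := exists_smooth hc hp (d / (4 * Real.pi)) (by positivity)
  refine no_smooth hφs hφp (d / 2) (by positivity) fun x => ?_
  obtain ⟨i, hi⟩ := hex x
  refine ⟨i, ?_⟩
  have h1 : |φ x i - ψ x i| ≤ d / (4 * Real.pi) := by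
    have := (dist_le_pi_dist (φ x) (ψ x) i).trans (hφ x)
    rwa [Real.dist_eq] at this
  have h2 := Real.abs_cos_sub_cos_le (2 * Real.pi * (x i + φ x i)) (2 * Real.pi * (x i + ψ x i))
  have h3 : |2 * Real.pi * (x i + φ x i) - 2 * Real.pi * (x i + ψ x i)| ≤ d / 2 := by
    rw [← mul_sub, abs_mul, abs_of_pos (by positivity), add_sub_add_left_eq_sub]
    calc _ ≤ 2 * Real.pi * (d / (4 * Real.pi)) := by gcongr
      _ = d / 2 := by field_simp; norm_num
  have := (le_abs_self _).trans (h2.trans h3)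
  linarith

/-- the projection `ℝⁿ → Tⁿ` -/
noncomputable def pr {n : ℕ} (x : Fin n → ℝ) : Torus n := fun i => (x i : AddCircle (1 : ℝ))

lemma continuous_pr {n : ℕ} : Continuous (pr (n := n)) :=
  continuous_pi fun i => (AddCircle.continuous_mk' 1).comp (continuous_apply i)

lemma pr_surj {n : ℕ} (y : Torus n) : ∃ x, pr x = y := by
  choose x hx using fun i => QuotientAddGroup.mk_surjective (y i)
  exact ⟨x, funext hx⟩

lemma pr_zero_iff {n : ℕ} (x : Fin n → ℝ) : pr x = 0 ↔ ∃ m, x = zv m := by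
  constructor
  · intro h
    have : ∀ i, ∃ m : ℤ, x i = m := fun i => by
      have h1 : ((x i : ℝ) : AddCircle (1:ℝ)) = 0 := congrFun h i
      obtain ⟨m, hm⟩ := (AddCircle.coe_eq_zero_iff (1:ℝ)).1 h1
      exact ⟨m, by simpa using hm.symm⟩
    choose m hm using this
    exact ⟨m, funext hm⟩
  · rintro ⟨m, rfl⟩
    funext i
    exact (AddCircle.coe_eq_zero_iff (1:ℝ)).2 ⟨m i, by simp [zv]⟩

lemma pr_sub {n : ℕ} (x y : Fin n → ℝ) : pr (x - y) = pr x - pr y := rfl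

lemma pr_add {n : ℕ} (x y : Fin n → ℝ) : pr (x + y) = pr x + pr y := rfl

lemma pr_eq_iff {n : ℕ} (x y : Fin n → ℝ) : pr x = pr y ↔ ∃ m, x = y + zv m := by
  rw [← sub_eq_zero, ← pr_sub, pr_zero_iff]
  simp only [sub_eq_iff_eq_add, add_comm]

/-- real version of an integer matrix -/
noncomputable abbrev rM {n : ℕ} (A : Matrix (Fin n) (Fin n) ℤ) : Matrix (Fin n) (Fin n) ℝ :=
  A.map (Int.castRingHom ℝ)

lemma torusHom_pr {n : ℕ} (A : Matrix (Fin n) (Fin n) ℤ) (x : Fin n → ℝ) :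
    torusHom A (pr x) = pr ((rM A).mulVec x) := by
  funext j
  change ∑ i, A j i • ((x i : ℝ) : AddCircle (1:ℝ)) =
    QuotientAddGroup.mk' (AddSubgroup.zmultiples (1:ℝ)) (∑ i, ((A j i : ℤ) : ℝ) * x i)
  rw [map_sum]
  refine Finset.sum_congr rfl fun i _ => ?_
  rw [← zsmul_eq_mul, map_zsmul]
  rfl

lemma torusHom_sub {n : ℕ} (A B : Matrix (Fin n) (Fin n) ℤ) (x : Torus n) :
    torusHom (A - B) x = torusHom A x - torusHom B x := by
  funext j
  simp [torusHom, sub_smul]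

lemma rM_zv {n : ℕ} (A : Matrix (Fin n) (Fin n) ℤ) (m : Fin n → ℤ) :
    (rM A).mulVec (zv m) = zv (A.mulVec m) := by
  funext j
  simp [Matrix.mulVec, dotProduct, zv]

lemma zv_inj {n : ℕ} : Function.Injective (zv (n := n)) := fun a b h =>
  funext fun i => by
    have h1 : (a i : ℝ) = b i := congrFun h i
    exact_mod_cast h1

lemma rM_det {n : ℕ} {A : Matrix (Fin n) (Fin n) ℤ} (h : A.det ≠ 0) : IsUnit (rM A).det := by
  rw [isUnit_iff_ne_zero, rM, ← RingHom.mapMatrix_apply, ← RingHom.map_det]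
  simpa using h

lemma card_coker {n : ℕ} {A : Matrix (Fin n) (Fin n) ℤ} (h : A.det ≠ 0) :
    ENat.card ((Fin n → ℤ) ⧸ LinearMap.range A.mulVecLin) = (A.det.natAbs : ℕ∞) := by
  have hinj : Function.Injective A.mulVecLin := by
    have := Matrix.mulVec_injective_of_det_ne_zero h
    exact this
  have h1 := Submodule.natAbs_det_equiv (LinearMap.range A.mulVecLin) (LinearEquiv.ofInjective A.mulVecLin hinj)
  have h2 : (LinearMap.range A.mulVecLin).subtype ∘ₗ
      AddMonoidHom.toIntLinearMap ((LinearEquiv.ofInjective A.mulVecLin hinj : (Fin n → ℤ) →+ LinearMap.range A.mulVecLin)) = A.mulVecLin := by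
    ext; rfl
  have h3 : LinearMap.det A.mulVecLin = A.det := by
    rw [← Matrix.toLin'_apply', LinearMap.det_toLin']
  rw [h2, h3] at h1
  have : Finite ((Fin n → ℤ) ⧸ LinearMap.range A.mulVecLin) := by
    refine Nat.finite_of_card_ne_zero ?_
    rw [← h1]
    simpa using h
  rw [ENat.card_eq_coe_natCard, ← h1]

lemma card_ker_le {n : ℕ} {A : Matrix (Fin n) (Fin n) ℤ} (h : A.det ≠ 0) :
    ENat.card {x : Torus n // torusHom A x = 0} ≤ (A.det.natAbs : ℕ∞) := by
  rw [← card_coker h]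
  have hex : ∀ x : {x : Torus n // torusHom A x = 0}, ∃ (y : Fin n → ℝ) (m : Fin n → ℤ),
      pr y = x.1 ∧ (rM A).mulVec y = zv m := by
    rintro ⟨x, hx⟩
    obtain ⟨y, rfl⟩ := pr_surj x
    rw [torusHom_pr, pr_zero_iff] at hx
    obtain ⟨m, hm⟩ := hx
    exact ⟨y, m, rfl, hm⟩
  choose y m hy hm using hex
  refine ENat.card_le_card_of_injective (f := fun x => Submodule.Quotient.mk (m x)) fun a b hab => ?_
  rw [Submodule.Quotient.eq] at hab
  obtain ⟨k, hk⟩ := hab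
  apply Subtype.ext
  rw [← hy, ← hy, pr_eq_iff]
  refine ⟨k, ?_⟩
  apply Matrix.mulVec_injective_of_det_ne_zero (rM_det h).ne_zero
  rw [Matrix.mulVec_add, hm, hm, rM_zv, ← Matrix.mulVecLin_apply, hk]
  funext i
  simp [zv]

lemma exists_lift {n : ℕ} (A₁ A₂ : Matrix (Fin n) (Fin n) ℤ) (f₁ f₂ : C(Torus n, Torus n))
    (h₁ : (torusHom A₁).Homotopic f₁) (h₂ : (torusHom A₂).Homotopic f₂) :
    ∃ φ : Torus n → (Fin n → ℝ), Continuous φ ∧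
      ∀ x, f₁ x - f₂ x = torusHom (A₁ - A₂) x + pr (φ x) := by
  obtain ⟨F₁⟩ := h₁
  obtain ⟨F₂⟩ := h₂
  have cov := AddCircle.isCoveringMap_coe (1 : ℝ)
  let H : Fin n → C(unitInterval × Torus n, AddCircle (1 : ℝ)) := fun j =>
    ⟨fun p => (F₁ p - F₂ p - torusHom (A₁ - A₂) p.2) j, by
      refine (continuous_apply j).comp ?_
      exact ((F₁.continuous.sub F₂.continuous).sub ((torusHom (A₁ - A₂)).continuous.comp continuous_snd))⟩
  have H0 : ∀ j x, H j (0, x) = (((ContinuousMap.const (Torus n) (0:ℝ)) x : ℝ) : AddCircle (1:ℝ)) := by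
    intro j x
    simp [H, torusHom_sub]
  refine ⟨fun x j => cov.liftHomotopy (H j) (ContinuousMap.const _ 0) (H0 j) (1, x), ?_, ?_⟩
  · exact continuous_pi fun j => (ContinuousMap.continuous _).comp (by fun_prop)
  · intro x
    funext j
    have := congrFun (cov.liftHomotopy_lifts (H j) (ContinuousMap.const _ 0) (H0 j)) (1, x)
    simp only [Function.comp_apply] at this
    simp only [Pi.add_apply, pr]
    rw [this]
    simp [H]

lemma exists_zero {n : ℕ} {A : Matrix (Fin n) (Fin n) ℤ} (h : A.det ≠ 0) {φ : Torus n → (Fin n → ℝ)}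
    (hφ : Continuous φ) (k : Fin n → ℤ) : ∃ x, (rM A).mulVec x + φ (pr x) = zv k := by
  have hc : Continuous fun x => (rM A)⁻¹.mulVec (φ (pr x) - zv k) := by
    refine Continuous.matrix_mulVec continuous_const ?_
    exact (hφ.comp continuous_pr).sub continuous_const
  obtain ⟨x, hx⟩ := exists_int_point hc (by
    intro m x
    have : pr (x + zv m) = pr x := (pr_eq_iff _ _).2 ⟨m, rfl⟩
    simp only [this])
  refine ⟨x, ?_⟩
  have h1 := congrArg (rM A).mulVec hx
  rw [Matrix.mulVec_add, Matrix.mulVec_mulVec, Matrix.mul_nonsing_inv _ (rM_det h), Matrix.one_mulVec,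
    Matrix.mulVec_zero] at h1
  rw [← sub_eq_zero, ← h1]
  abel

lemma lower {n : ℕ} (A₁ A₂ : Matrix (Fin n) (Fin n) ℤ) (hdet : (A₁ - A₂).det ≠ 0) (f₁ f₂ : C(Torus n, Torus n))
    (h₁ : (torusHom A₁).Homotopic f₁) (h₂ : (torusHom A₂).Homotopic f₂) :
    ((A₁ - A₂).det.natAbs : ℕ∞) ≤ ENat.card {x : Torus n // f₁ x = f₂ x} := by
  obtain ⟨φ, hφ, hf⟩ := exists_lift A₁ A₂ f₁ f₂ h₁ h₂
  rw [← card_coker hdet]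
  choose x hx using exists_zero hdet hφ
  have hmem : ∀ k, f₁ (pr (x k)) = f₂ (pr (x k)) := by
    intro k
    rw [← sub_eq_zero, hf, torusHom_pr, ← pr_add, hx, pr_zero_iff]
    exact ⟨k, rfl⟩
  refine ENat.card_le_card_of_injective (f := fun q => (⟨pr (x (Quotient.out q)), hmem _⟩ : {x : Torus n // f₁ x = f₂ x})) fun a b hab => ?_
  simp only [Subtype.mk.injEq] at hab
  obtain ⟨m, hm⟩ := (pr_eq_iff _ _).1 hab
  have ha := hx (Quotient.out a)
  have hb := hx (Quotient.out b)
  rw [hab, hm, Matrix.mulVec_add, rM_zv, add_right_comm, hb] at ha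
  have hk : Quotient.out a = Quotient.out b + (A₁ - A₂).mulVec m := by
    apply zv_inj
    rw [← ha]
    funext i
    simp [zv]
  rw [← Quotient.out_eq a, ← Quotient.out_eq b]
  refine (Submodule.Quotient.eq (LinearMap.range (A₁ - A₂).mulVecLin)).2 ⟨m, ?_⟩
  rw [hk, Matrix.mulVecLin_apply]
  abel

theorem stmt7 (n : ℕ) (hn : 1 ≤ n) (A₁ A₂ : Matrix (Fin n) (Fin n) ℤ)
    (hdet : (A₁ - A₂).det ≠ 0) :
    (∃ f₁' f₂' : C(Torus n, Torus n),
      (torusHom A₁).Homotopic f₁' ∧ (torusHom A₂).Homotopic f₂' ∧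
      ENat.card {x : Torus n // f₁' x = f₂' x} = ((A₁ - A₂).det.natAbs : ℕ∞)) ∧
    (∀ f₁' f₂' : C(Torus n, Torus n),
      (torusHom A₁).Homotopic f₁' → (torusHom A₂).Homotopic f₂' →
      ((A₁ - A₂).det.natAbs : ℕ∞) ≤ ENat.card {x : Torus n // f₁' x = f₂' x}) := by
  refine ⟨⟨torusHom A₁, torusHom A₂, .refl _, .refl _, le_antisymm ?_ ?_⟩, lower A₁ A₂ hdet⟩
  · have := card_ker_le hdet
    simpa only [torusHom_sub, sub_eq_zero] using this
  · exact lower A₁ A₂ hdet _ _ (.refl _) (.refl _)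
end

section
/- Let m > n ≥ 1 and let A₁, A₂ be n×m integer matrices such that A₁−A₂ has rank n over ℚ. Then MC(f_{A₁}, f_{A₂}) = ∞: for every pair of continuous maps f₁' homotopic to f_{A₁} and f₂' homotopic to f_{A₂}, the coincidence set {x ∈ Tᵐ : f₁'(x) = f₂'(x)} is infinite. -/
section Brouwer

open MeasureTheory Metric Set

lemma id_add_bij {E : Type*} [NormedAddCommGroup E] [CompleteSpace E] (k : E → E) (c : ℝ)
    (hc0 : 0 ≤ c) (hc : c < 1) (hk : ∀ x y, ‖k x - k y‖ ≤ c * ‖x - y‖) :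
    Function.Bijective (fun x => x + k x) := by
  constructor
  · intro x y h
    have h1 : x - y = -(k x - k y) := by
      have h' : x + k x = y + k y := h
      have : x - y - -(k x - k y) = (x + k x) - (y + k y) := by abel
      rw [h', sub_self] at this
      exact sub_eq_zero.mp this
    have h2 := hk x y
    have h3 : ‖x - y‖ = ‖k x - k y‖ := by rw [h1, norm_neg]
    have h4 : ‖x - y‖ = 0 := by nlinarith [norm_nonneg (x - y)]
    exact sub_eq_zero.mp (norm_eq_zero.mp h4)
  · intro z
    have hcw : ContractingWith ⟨c, hc0⟩ (fun y => z - k y) := by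
      refine ⟨by exact_mod_cast hc, LipschitzWith.of_dist_le_mul fun x y => ?_⟩
      rw [dist_eq_norm, dist_eq_norm, sub_sub_sub_cancel_left, norm_sub_rev]
      exact hk x y
    refine ⟨hcw.fixedPoint, ?_⟩
    have := hcw.fixedPoint_isFixedPt
    have h : z - k hcw.fixedPoint = hcw.fixedPoint := this
    show hcw.fixedPoint + k hcw.fixedPoint = z
    nth_rewrite 1 [← h]
    abel

lemma det_poly {E : Type*} [NormedAddCommGroup E] [InnerProductSpace ℝ E] [FiniteDimensional ℝ E] (d : ℕ)
    (hd : Module.finrank ℝ E = d) (Lm : E →L[ℝ] E) (t : ℝ) :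
    (ContinuousLinearMap.id ℝ E + t • Lm).det =
      ∑ i ∈ Finset.range (d + 1),
        (ContinuousLinearMap.id ℝ E + (i : ℝ) • Lm).det *
          (Lagrange.basis (Finset.range (d + 1)) (fun i : ℕ => (i : ℝ)) i).eval t := by
  classical
  set b := Module.finBasisOfFinrankEq ℝ E hd
  set M := LinearMap.toMatrix b b (Lm : E →ₗ[ℝ] E)
    with hM
  set p := ((Polynomial.X : Polynomial ℝ) • M.map (Polynomial.C (R := ℝ)) +
    (1 : Matrix (Fin d) (Fin d) ℝ).map (Polynomial.C (R := ℝ))).det with hp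
  have hdeg : p.natDegree ≤ d := by
    have h := Polynomial.natDegree_det_X_add_C_le M 1
    rwa [Fintype.card_fin] at h
  have hev : ∀ s : ℝ, (ContinuousLinearMap.id ℝ E + s • Lm).det = p.eval s := by
    intro s
    have h1 : p.eval s = Polynomial.evalRingHom s p := rfl
    rw [h1, hp, RingHom.map_det]
    have h2 : (ContinuousLinearMap.id ℝ E + s • Lm).det =
      LinearMap.det ((LinearMap.id : E →ₗ[ℝ] _) + s • (Lm : E →ₗ[ℝ] E)) := rfl
    rw [h2, ← LinearMap.det_toMatrix b, map_add, map_smul, LinearMap.toMatrix_id]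
    congr 1
    ext i j
    simp [Matrix.one_apply, apply_ite, hM]
    rw [add_comm]
    congr 1
    split_ifs <;> simp [mul_comm]
  have hI := Lagrange.eq_interpolate (s := Finset.range (d + 1)) (v := fun i : ℕ => (i : ℝ)) (f := p)
    (fun a _ b _ h => Nat.cast_injective h) (by
      rw [Finset.card_range]
      exact lt_of_le_of_lt Polynomial.degree_le_natDegree (by exact_mod_cast Nat.lt_succ_of_le hdeg))
  rw [hev t]
  conv_lhs => rw [hI]
  rw [Lagrange.interpolate_apply, Polynomial.eval_finsetSum]
  refine Finset.sum_congr rfl fun i _ => ?_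
  rw [hev]
  simp

lemma no_retraction {E : Type*} [NormedAddCommGroup E] [InnerProductSpace ℝ E] [FiniteDimensional ℝ E]
    [MeasurableSpace E] [BorelSpace E] (H : E → E)
    (hH : ContDiff ℝ 1 H) (R : ℝ) (hR : 0 < R) (hn : ∀ y, ‖H y‖ = R)
    (hid : ∀ y, ‖y‖ = R → H y = y) : False := by
  classical
  have : CompleteSpace E := FiniteDimensional.complete ℝ E
  obtain ⟨d, hd⟩ : ∃ d, Module.finrank ℝ E = d := ⟨_, rfl⟩
  set B : Set E := closedBall 0 R with hB
  have hBc : IsCompact B := isCompact_closedBall _ _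
  set g : E → E := fun y => H y - y with hg
  have hgC : ContDiff ℝ 1 g := hH.sub contDiff_id
  have hg' : ∀ y, HasFDerivAt g (fderiv ℝ g y) y := fun y =>
    (hgC.differentiable (by norm_num) y).hasFDerivAt
  have hcont : Continuous (fderiv ℝ g) := hgC.continuous_fderiv (by norm_num)
  obtain ⟨C, hC⟩ := hgC.contDiffOn.exists_lipschitzOnWith (by norm_num)
    (convex_closedBall (0 : E) R) hBc
  have hC' : ∀ x ∈ B, ∀ y ∈ B, ‖g x - g y‖ ≤ C * ‖x - y‖ := by
    intro x hx y hy
    have := hC.dist_le_mul x hx y hy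
    rwa [dist_eq_norm, dist_eq_norm] at this
  set K : E → E := fun y => if ‖y‖ ≤ R then g y else 0 with hK
  have hC0 : (0 : ℝ) ≤ C := C.2
  have key : ∀ x y : E, ‖x‖ ≤ R → R < ‖y‖ → ‖g x‖ ≤ 2 * C * ‖x - y‖ := by
    intro x y hx hy
    have hy0 : 0 < ‖y‖ := hR.trans hy
    set w : E := (R / ‖y‖) • y with hw
    have hwn : ‖w‖ = R := by
      rw [hw, norm_smul, Real.norm_of_nonneg (by positivity)]; field_simp
    have hgw : g w = 0 := by simp [hg, hid w hwn]
    have h1 := hC' x (by simpa [hB] using hx) w (by simp [hB, hwn])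
    rw [hgw, sub_zero] at h1
    have h2 : ‖w - y‖ = ‖y‖ - R := by
      have : w - y = (R / ‖y‖ - 1) • y := by rw [hw, sub_smul, one_smul]
      rw [this, norm_smul, Real.norm_of_nonpos (by
        rw [sub_nonpos, div_le_one hy0]; exact hy.le)]
      field_simp; ring
    have h3 : ‖y‖ - ‖x‖ ≤ ‖x - y‖ := by rw [norm_sub_rev]; exact norm_sub_norm_le _ _
    have h4 : ‖x - w‖ ≤ 2 * ‖x - y‖ := by
      have : x - w = (x - y) - (w - y) := by abel
      rw [this]
      refine (norm_sub_le _ _).trans ?_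
      linarith
    nlinarith
  have hKL : ∀ x y, ‖K x - K y‖ ≤ 2 * C * ‖x - y‖ := by
    intro x y
    simp only [hK]
    split_ifs with hx hy hy
    · have := hC' x (by simpa [hB] using hx) y (by simpa [hB] using hy)
      nlinarith [norm_nonneg (x - y), mul_nonneg hC0 (norm_nonneg (x - y))]
    · rw [sub_zero]; exact key x y hx (not_le.mp hy)
    · rw [zero_sub, norm_neg, norm_sub_rev x y]; exact key y x hy (not_le.mp hx)
    · simp; positivity
  -- the volume function
  set D : ℝ → E → ℝ := fun t y => (ContinuousLinearMap.id ℝ E + t • fderiv ℝ g y).det with hD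
  have hDcont : Continuous (fun z : ℝ × E => D z.1 z.2) := by
    apply ContinuousLinearMap.continuous_det.comp
    exact continuous_const.add (continuous_fst.smul (hcont.comp continuous_snd))
  have hDc : ∀ t, Continuous (D t) := fun t => hDcont.comp (Continuous.prodMk_right t)
  have hDint : ∀ t, IntegrableOn (D t) B volume := fun t =>
    (hDc t).continuousOn.integrableOn_compact hBc
  have hpos : ∀ᶠ t in nhds (0 : ℝ), ∀ y ∈ B, 0 < D t y := by
    refine hBc.eventually_forall_of_forall_eventually (P := fun t y => 0 < D t y) fun y _ => ?_
    refine hDcont.continuousAt.eventually_mem (isOpen_Ioi.mem_nhds ?_)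
    simp [hD, ContinuousLinearMap.det]
  have hsmall : ∀ᶠ t in nhds (0 : ℝ), |t| * (2 * (C : ℝ)) < 1 := by
    have : Continuous fun t : ℝ => |t| * (2 * (C : ℝ)) := by fun_prop
    exact this.continuousAt.eventually_mem (isOpen_Iio.mem_nhds (by simp))
  have hvol : ∀ᶠ t in nhds (0 : ℝ), ∫ y in B, D t y = (volume B).toReal := by
    filter_upwards [hpos, hsmall] with t htpos ht
    have hbij := id_add_bij (fun y => t • K y) (|t| * (2 * C)) (by positivity) ht (by
      intro x y
      rw [← smul_sub, norm_smul, Real.norm_eq_abs, mul_assoc]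
      exact mul_le_mul_of_nonneg_left (hKL x y) (abs_nonneg t))
    set F : E → E := fun y => y + t • K y with hF
    have hout : ∀ y, R < ‖y‖ → F y = y := by
      intro y hy; simp [hF, hK, not_le.mpr hy]
    have himg : F '' B = B := by
      apply Subset.antisymm
      · rintro _ ⟨y, hy, rfl⟩
        by_contra hcon
        have h1 : R < ‖F y‖ := by simpa [hB] using hcon
        have h2 := hbij.1 (hout _ h1)
        rw [h2] at hcon
        exact hcon hy
      · intro z hz
        obtain ⟨y, hy⟩ := hbij.2 z
        refine ⟨y, ?_, hy⟩
        by_contra hcon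
        have h1 : R < ‖y‖ := by simpa [hB] using hcon
        have h2 : F y = z := hy
        rw [hout y h1] at h2
        exact hcon (h2 ▸ hz)
    have hder : ∀ x ∈ B, HasFDerivWithinAt F (ContinuousLinearMap.id ℝ E + t • fderiv ℝ g x) B x := by
      intro x hx
      have h1 : HasFDerivWithinAt (fun y => y + t • g y)
          (ContinuousLinearMap.id ℝ E + t • fderiv ℝ g x) B x :=
        ((hasFDerivAt_id x).add ((hg' x).const_smul t)).hasFDerivWithinAt
      refine h1.congr (fun y hy => ?_) ?_
      · have : ‖y‖ ≤ R := by simpa [hB] using hy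
        simp [hF, hK, this]
      · have : ‖x‖ ≤ R := by simpa [hB] using hx
        simp [hF, hK, this]
    have hcv := lintegral_abs_det_fderiv_eq_addHaar_image volume hBc.measurableSet hder hbij.1.injOn
    rw [himg] at hcv
    have h0 : 0 ≤ᵐ[volume.restrict B] D t :=
      (ae_restrict_iff' hBc.measurableSet).mpr (Filter.Eventually.of_forall fun y hy => (htpos y hy).le)
    have h1 := ofReal_integral_eq_lintegral_ofReal (hDint t) h0
    have h2 : ∫⁻ y in B, ENNReal.ofReal (D t y) = volume B := by
      rw [← hcv]
      refine setLIntegral_congr_fun hBc.measurableSet fun y hy => ?_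
      show ENNReal.ofReal (D t y) = ENNReal.ofReal |D t y|
      rw [abs_of_pos (htpos y hy)]
    rw [← h2, ← h1, ENNReal.toReal_ofReal (integral_nonneg_of_ae h0)]
  -- polynomial
  set P : Polynomial ℝ := ∑ i ∈ Finset.range (d + 1), Polynomial.C (∫ y in B, D i y) *
      (Lagrange.basis (Finset.range (d + 1)) (fun i : ℕ => (i : ℝ)) i) with hP
  have hPev : ∀ t, ∫ y in B, D t y = P.eval t := by
    intro t
    have h1 : ∀ y, D t y = ∑ i ∈ Finset.range (d + 1), D i y *
      (Lagrange.basis (Finset.range (d + 1)) (fun i : ℕ => (i : ℝ)) i).eval t := fun y =>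
        det_poly d hd (fderiv ℝ g y) t
    simp_rw [h1]
    rw [integral_finsetSum (Finset.range (d + 1)) (f := fun (i : ℕ) y => D (i : ℝ) y *
      (Lagrange.basis (Finset.range (d + 1)) (fun i : ℕ => (i : ℝ)) i).eval t)
      (fun i _ => (hDint (i : ℝ)).mul_const _)]
    simp_rw [integral_mul_const]
    simp [hP, Polynomial.eval_finsetSum]
  have hPc : P = Polynomial.C (volume B).toReal := by
    apply Polynomial.eq_of_infinite_eval_eq
    apply infinite_of_mem_nhds (0 : ℝ)
    filter_upwards [hvol] with t ht
    simp [← hPev, ht]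
  have h1 : ∫ y in B, D 1 y = (volume B).toReal := by rw [hPev, hPc]; simp
  have h2 : ∀ y, D 1 y = 0 := by
    intro y
    have hHd : HasFDerivAt H (ContinuousLinearMap.id ℝ E + (1 : ℝ) • fderiv ℝ g y) y := by
      have := (hasFDerivAt_id y).add ((hg' y).const_smul (1 : ℝ))
      refine this.congr_of_eventuallyEq (Filter.Eventually.of_forall fun z => ?_)
      simp [hg]
    by_contra hne
    set L := ContinuousLinearMap.id ℝ E + (1 : ℝ) • fderiv ℝ g y with hL
    have hne' : LinearMap.det (L : E →ₗ[ℝ] E) ≠ 0 := hne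
    obtain ⟨v, hv⟩ := (LinearMap.equivOfDetNeZero _ hne').surjective (H y)
    have hv' : L v = H y := hv
    have hin := hHd.inner ℝ hHd
    have hconst : (fun z => inner ℝ (H z) (H z)) = fun _ : E => R ^ 2 := by
      funext z; rw [real_inner_self_eq_norm_sq, hn]
    rw [hconst] at hin
    have h0 := hin.unique (hasFDerivAt_const (R ^ 2) y)
    have h3 := congrArg (fun T : E →L[ℝ] ℝ => T v) h0
    simp [hv', hn] at h3
    exact hR.ne' h3
  simp_rw [h2] at h1
  simp only [integral_zero] at h1
  have : 0 < (volume B).toReal := ENNReal.toReal_pos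
    (measure_closedBall_pos volume (0 : E) hR).ne' hBc.measure_lt_top.ne
  linarith

open scoped Manifold ContDiff in
lemma exists_zero_s8 {E : Type*} [NormedAddCommGroup E] [InnerProductSpace ℝ E] [FiniteDimensional ℝ E]
    [MeasurableSpace E] [BorelSpace E] (ψ : E → E)
    (hψ : Continuous ψ) (M : ℝ) (hM : ∀ y, ‖ψ y‖ ≤ M) : ∃ y, y + ψ y = 0 := by
  by_contra! hcon
  have hM0 : 0 ≤ M := (norm_nonneg _).trans (hM 0)
  obtain ⟨q, hq⟩ := exists_contMDiffMap_forall_mem_convex_of_local_const (n := 1) (𝓘(ℝ, E)) (F := E)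
    (t := fun y : E => ball (ψ y) ‖y + ψ y‖ ∩ ball 0 (M + 1))
    (fun y => (convex_ball _ _).inter (convex_ball _ _)) (fun y => ⟨ψ y, by
      have h1 : ∀ᶠ z in nhds y, dist (ψ y) (ψ z) < ‖z + ψ z‖ := by
        refine Filter.Tendsto.eventually_lt
          (continuous_const.dist hψ).continuousAt.tendsto
          (continuous_id.add hψ).norm.continuousAt.tendsto ?_
        simpa using hcon y
      filter_upwards [h1] with z hz
      refine ⟨hz, ?_⟩
      rw [mem_ball_zero_iff]
      linarith [hM y]⟩)
  have hqC : ContDiff ℝ 1 (q : E → E) := by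
    have := q.contMDiff
    exact this.contDiff
  let χ : ContDiffBump (0 : E) := ⟨M + 1, M + 2, by linarith, by linarith⟩
  have hχC : ContDiff ℝ 1 (χ : E → ℝ) := χ.contDiff
  set G : E → E := fun y => y + χ y • q y with hG
  have hGC : ContDiff ℝ 1 G := contDiff_id.add (hχC.smul hqC)
  have hG0 : ∀ y, G y ≠ 0 := by
    intro y h
    by_cases hy : ‖y‖ ≤ M + 1
    · have : χ y = 1 := χ.one_of_mem_closedBall (by simpa [χ] using hy)
      simp only [hG, this, one_smul] at h
      have h1 := (hq y).1
      rw [mem_ball_iff_norm] at h1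
      have h2 : q y - ψ y = -(y + ψ y) + (y + q y) := by abel
      rw [h2, h, add_zero, norm_neg] at h1
      exact lt_irrefl _ h1
    · push Not at hy
      have h1 := (hq y).2
      rw [mem_ball_zero_iff] at h1
      have h2 : y = -(χ y • q y) := eq_neg_of_add_eq_zero_left h
      have h3 : ‖y‖ = χ y * ‖q y‖ := by
        conv_lhs => rw [h2]
        rw [norm_neg, norm_smul, Real.norm_of_nonneg χ.nonneg]
      have h4 : χ y ≤ 1 := χ.le_one
      nlinarith [norm_nonneg (q y)]
  refine no_retraction (fun y => ((M + 2) / ‖G y‖) • G y) ?_ (M + 2) (by linarith) ?_ ?_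
  · exact ContDiff.smul (contDiff_const.div (hGC.norm ℝ hG0) (fun y => norm_ne_zero_iff.mpr (hG0 y))) hGC
  · intro y
    have := norm_pos_iff.mpr (hG0 y)
    rw [norm_smul, Real.norm_of_nonneg (by positivity)]
    field_simp
  · intro y hy
    have : χ y = 0 := χ.zero_of_le_dist (by simp [χ, hy])
    have hGy : G y = y := by simp [hG, this]
    simp only [hGy, hy]
    rw [div_self (by linarith), one_smul]

end Brouwer

section Lifting

lemma exists_lift_map {m n : ℕ} (A₁ A₂ : Matrix (Fin n) (Fin m) ℤ)
    (f₁ f₂ : C(Torus m, Torus n))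
    (h₁ : (torusHom A₁).Homotopic f₁) (h₂ : (torusHom A₂).Homotopic f₂) :
    ∃ φ : Fin n → C(Torus m, ℝ), ∀ x j,
      f₁ x j - f₂ x j = ∑ i, (A₁ - A₂) j i • x i + ((φ j x : ℝ) : AddCircle (1 : ℝ)) := by
  obtain ⟨H₁⟩ := h₁
  obtain ⟨H₂⟩ := h₂
  have key : ∀ j, ∃ φ : C(Torus m, ℝ), ∀ x,
      f₁ x j - f₂ x j = ∑ i, (A₁ - A₂) j i • x i + ((φ x : ℝ) : AddCircle (1 : ℝ)) := by
    intro j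
    let H : C(unitInterval × Torus m, AddCircle (1 : ℝ)) :=
      ⟨fun z => H₁ z j - H₂ z j - ∑ i, (A₁ - A₂) j i • z.2 i, by
        have c1 : Continuous fun z => H₁ z j := (continuous_apply j).comp H₁.continuous
        have c2 : Continuous fun z => H₂ z j := (continuous_apply j).comp H₂.continuous
        refine (c1.sub c2).sub (continuous_finset_sum _ fun i _ => ?_)
        exact ((continuous_apply i).comp continuous_snd).zsmul _⟩
    have hH0 : ∀ x, H (0, x) = (((0 : C(Torus m, ℝ)) x : ℝ) : AddCircle (1 : ℝ)) := by
      intro x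
      show H₁ (0, x) j - H₂ (0, x) j - ∑ i, (A₁ - A₂) j i • x i = _
      rw [H₁.apply_zero, H₂.apply_zero]
      simp [torusHom, sub_smul, Finset.sum_sub_distrib]
    have cov := AddCircle.isCoveringMap_coe (1 : ℝ)
    refine ⟨(cov.liftHomotopy H 0 hH0).comp ((ContinuousMap.const _ 1).prodMk (ContinuousMap.id _)),
      fun x => ?_⟩
    have h := congrFun (cov.liftHomotopy_lifts H 0 hH0) (1, x)
    have h' : ((cov.liftHomotopy H 0 hH0 (1, x) : ℝ) : AddCircle (1 : ℝ)) = 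
      H₁ (1, x) j - H₂ (1, x) j - ∑ i, (A₁ - A₂) j i • x i := h
    rw [H₁.apply_one, H₂.apply_one] at h'
    show _ = _ + ((cov.liftHomotopy H 0 hH0 (1, x) : ℝ) : AddCircle (1 : ℝ))
    rw [h']
    abel
  choose φ hφ using key
  exact ⟨φ, fun x j => hφ j x⟩

/-- The projection `ℝᵏ → Tᵏ`. -/
noncomputable def torusProj {m : ℕ} (x : Fin m → ℝ) : Torus m := fun i => (x i : AddCircle (1 : ℝ))

lemma continuous_torusProj {m : ℕ} : Continuous (torusProj (m := m)) :=
  continuous_pi fun i => (AddCircle.continuous_mk' (1 : ℝ)).comp (continuous_apply i)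

lemma countable_fibre {m : ℕ} (z : Torus m) : (torusProj ⁻¹' {z}).Countable := by
  rcases (torusProj ⁻¹' {z}).eq_empty_or_nonempty with h | ⟨x₀, hx₀⟩
  · rw [h]; exact Set.countable_empty
  · refine (Set.countable_range (fun k : Fin m → ℤ => fun i => x₀ i + k i)).mono ?_
    intro x hx
    have h : torusProj x = torusProj x₀ := by
      rw [Set.mem_preimage, Set.mem_singleton_iff] at hx hx₀
      rw [hx, hx₀]
    have h2 : ∀ i, ∃ k : ℤ, x i = x₀ i + k := by
      intro i
      have := congrFun h i
      have h3 : ((x i - x₀ i : ℝ) : AddCircle (1 : ℝ)) = 0 := by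
        rw [AddCircle.coe_sub]; exact sub_eq_zero.mpr this
      obtain ⟨k, hk⟩ := (AddCircle.coe_eq_zero_iff (1 : ℝ)).mp h3
      refine ⟨k, ?_⟩
      simp at hk
      linarith
    choose k hk using h2
    exact ⟨k, (funext hk).symm⟩

lemma exists_zero_pi {n : ℕ} (ψ : (Fin n → ℝ) → (Fin n → ℝ)) (hψ : Continuous ψ)
    (M : ℝ) (hM : ∀ y j, |ψ y j| ≤ M) : ∃ y, y + ψ y = 0 := by
  let e := EuclideanSpace.equiv (Fin n) ℝ
  obtain ⟨y, hy⟩ := exists_zero_s8 (E := EuclideanSpace ℝ (Fin n)) (fun y => e.symm (ψ (e y)))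
    (e.symm.continuous.comp (hψ.comp e.continuous)) (‖(e.symm : (Fin n → ℝ) →L[ℝ] EuclideanSpace ℝ (Fin n))‖ * |M|) (by
      intro y
      refine ((e.symm : (Fin n → ℝ) →L[ℝ] EuclideanSpace ℝ (Fin n)).le_opNorm _).trans ?_
      refine mul_le_mul_of_nonneg_left ?_ (norm_nonneg _)
      refine (pi_norm_le_iff_of_nonneg (x := ψ (e y)) (abs_nonneg M)).mpr fun j => ?_
      exact (hM _ j).trans (le_abs_self M))
  refine ⟨e y, ?_⟩
  have := congrArg e hy
  rwa [map_add, e.apply_symm_apply, map_zero] at this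

end Lifting

theorem stmt8 (m n : ℕ) (hmn : n < m) (hn : 1 ≤ n)
    (A₁ A₂ : Matrix (Fin n) (Fin m) ℤ)
    (hrank : ((A₁ - A₂).map (Int.cast : ℤ → ℚ)).rank = n) :
    ∀ f₁' f₂' : C(Torus m, Torus n),
      (torusHom A₁).Homotopic f₁' → (torusHom A₂).Homotopic f₂' →
      Infinite {x : Torus m // f₁' x = f₂' x} := by
  intro f₁ f₂ h₁ h₂
  obtain ⟨φ, hφ⟩ := exists_lift_map A₁ A₂ f₁ f₂ h₁ h₂
  set A := A₁ - A₂ with hA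
  set Q := A.map (Int.cast : ℤ → ℚ) with hQ
  set Ar := A.map (Int.cast : ℤ → ℝ) with hAr
  -- right inverse
  have hsurj : Function.Surjective Q.mulVecLin := by
    rw [← LinearMap.range_eq_top]
    apply Submodule.eq_top_of_finrank_eq
    refine Eq.trans hrank ?_
    simp
  obtain ⟨B, hB⟩ : ∃ B : Matrix (Fin m) (Fin n) ℚ, Q * B = 1 := by
    choose b hb using fun j => hsurj (Pi.single j 1)
    refine ⟨Matrix.of fun i j => b j i, ?_⟩
    ext i j
    have := congrFun (hb j) i
    simp only [Matrix.mulVecLin_apply, Matrix.mulVec, dotProduct] at this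
    simp only [Matrix.mul_apply, Matrix.of_apply, this, Matrix.one_apply, Pi.single_apply]
  set Br := B.map (Rat.castHom ℝ) with hBr
  have hAB : Ar * Br = 1 := by
    have h := congrArg (fun X => X.map (Rat.castHom ℝ)) hB
    simp only [Matrix.map_mul] at h
    rw [Matrix.map_one _ (map_zero _) (map_one _)] at h
    rw [← h]
    congr 1
  obtain ⟨v, hv0, hv⟩ : ∃ v : Fin m → ℝ, v ≠ 0 ∧ Ar.mulVec v = 0 := by
    have hk := LinearMap.ker_ne_bot_of_finrank_lt (f := Ar.mulVecLin) (by simpa using hmn)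
    obtain ⟨v, hv, hv0⟩ := (Submodule.ne_bot_iff _).mp hk
    exact ⟨v, hv0, by simpa using hv⟩
  -- bound
  obtain ⟨M, hM⟩ : ∃ M, ∀ x j, |φ j x| ≤ M := by
    refine ⟨∑ j, ‖φ j‖, fun x j => ?_⟩
    refine ((φ j).norm_coe_le_norm x).trans ?_
    exact Finset.single_le_sum (f := fun j => ‖φ j‖) (fun j _ => norm_nonneg _) (Finset.mem_univ j)
  have hsol : ∀ s : ℝ, ∃ y : Fin n → ℝ,
      y + (fun j => φ j (torusProj (s • v + Br.mulVec y))) = 0 := by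
    intro s
    apply exists_zero_pi (fun y j => φ j (torusProj (s • v + Br.mulVec y))) _ M (fun y j => hM _ j)
    refine continuous_pi fun j => (φ j).continuous.comp (continuous_torusProj.comp ?_)
    exact continuous_const.add (Continuous.matrix_mulVec continuous_const continuous_id)
  choose y hy using hsol
  set x : ℝ → Fin m → ℝ := fun s => s • v + Br.mulVec (y s) with hx
  have hAx : ∀ s, Ar.mulVec (x s) = y s := by
    intro s
    rw [hx]
    simp only [Matrix.mulVec_add, Matrix.mulVec_smul, hv, smul_zero, zero_add, Matrix.mulVec_mulVec,
      hAB, Matrix.one_mulVec]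
  have hxinj : Function.Injective x := by
    intro s t hst
    have h1 : y s = y t := by rw [← hAx, ← hAx, hst]
    have h2 : s • v + Br.mulVec (y s) = t • v + Br.mulVec (y t) := hst
    rw [h1, add_left_inj] at h2
    exact smul_left_injective ℝ hv0 h2
  have hzero : ∀ s, f₁ (torusProj (x s)) = f₂ (torusProj (x s)) := by
    intro s
    funext j
    rw [← sub_eq_zero, hφ]
    have h1 : ∑ i, A j i • torusProj (x s) i = ((Ar.mulVec (x s) j : ℝ) : AddCircle (1 : ℝ)) := by
      simp only [torusProj, Matrix.mulVec, dotProduct, hAr, Matrix.map_apply]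
      have h2 := map_sum (QuotientAddGroup.mk' (AddSubgroup.zmultiples (1 : ℝ)))
        (fun i => ((A j i : ℤ) : ℝ) * x s i) Finset.univ
      refine Eq.trans ?_ h2.symm
      refine Finset.sum_congr rfl fun i _ => ?_
      rw [← zsmul_eq_mul, map_zsmul]
      rfl
    rw [h1, hAx, ← AddCircle.coe_add]
    have := congrFun (hy s) j
    simp only [Pi.add_apply, Pi.zero_apply] at this
    rw [this]; simp
  by_contra hfin
  rw [not_infinite_iff_finite] at hfin
  have hS : {z : Torus m | f₁ z = f₂ z}.Finite := hfin
  have hpre : (torusProj ⁻¹' {z : Torus m | f₁ z = f₂ z}).Countable := by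
    have : torusProj ⁻¹' {z : Torus m | f₁ z = f₂ z} =
        ⋃ z ∈ {z : Torus m | f₁ z = f₂ z}, torusProj ⁻¹' {z} := by
      ext; simp
    rw [this]
    exact hS.countable.biUnion fun z _ => countable_fibre z
  have huniv : (x ⁻¹' (torusProj ⁻¹' {z : Torus m | f₁ z = f₂ z})).Countable :=
    hpre.preimage hxinj
  have : x ⁻¹' (torusProj ⁻¹' {z : Torus m | f₁ z = f₂ z}) = Set.univ :=
    Set.eq_univ_of_forall fun s => hzero s
  rw [this] at huniv
  exact Cardinal.not_countable_real huniv
end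

section
/- Let G be a nontrivial finite group acting freely by diffeomorphisms on the sphere Sⁿ, let N = Sⁿ/G be the orbit space, and let m, n ≥ 2. Then for all continuous maps f₁, f₂ : Sᵐ → N, the set of path components of the homotopy coincidence space E(f₁,f₂) has exactly #G elements (the Reidemeister number equals the order of G). -/
open scoped Manifold

open unitInterval Topology

/-- A loop in the sphere avoiding a point is null-homotopic. -/
lemma sph_loop_avoid {n : ℕ} {x : Sph n} (γ : Path x x) (v : Sph n) (hv : ∀ s, γ s ≠ v) :
    Path.Homotopic γ (Path.refl x) := by
  have : Fact (Module.finrank ℝ (EuclideanSpace ℝ (Fin (n + 1))) = n + 1) := ⟨by simp⟩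
  let e := stereographic' n v
  have hsrc : ∀ s, γ s ∈ e.source := fun s => by simp [e, hv s]
  have hx : x ∈ e.source := by simpa using hsrc 0
  have hcs : Continuous e.symm := by
    have := e.continuousOn_symm
    rwa [show e.target = Set.univ by simp [e], continuousOn_univ] at this
  have hce : Continuous fun s => e (γ s) :=
    e.continuousOn.comp_continuous γ.continuous hsrc
  refine ⟨⟨⟨⟨fun q => e.symm ((1 - (q.1 : ℝ)) • e (γ q.2) + (q.1 : ℝ) • e x), ?_⟩, ?_, ?_⟩, ?_⟩⟩
  · apply hcs.comp
    have := hce.comp (continuous_snd (X := I) (Y := I))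
    exact ((continuous_const.sub (continuous_subtype_val.comp continuous_fst)).smul this).add
      ((continuous_subtype_val.comp continuous_fst).smul continuous_const)
  · intro s
    simp [e.left_inv (hsrc s)]
  · intro s
    simp [e.left_inv hx]
  · rintro t s (rfl | rfl) <;> simp [← add_smul, e.left_inv hx]

lemma sph_loop_null {n : ℕ} (hn : 2 ≤ n) {x : Sph n} (γ : Path x x) :
    Path.Homotopic γ (Path.refl x) := by
  let E := EuclideanSpace ℝ (Fin (n + 1))
  let c : C(I, E) := ⟨fun s => (γ s : E), by fun_prop⟩
  have hc : ∀ s, ‖c s‖ = 1 := fun s => by simp [c]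
  obtain ⟨N, hN0, hN⟩ : ∃ N : ℕ, N ≠ 0 ∧ ‖bernsteinApproximation N c - c‖ < 1 := by
    have h1 := (bernsteinApproximation_uniform c)
    have h2 := (Metric.tendsto_nhds.1 h1 1 one_pos).and (Filter.eventually_ne_atTop 0)
    obtain ⟨N, h, h'⟩ := h2.exists
    exact ⟨N, h', by rwa [dist_eq_norm] at h⟩
  set P := bernsteinApproximation N c with hP
  have hd : ∀ s, ‖P s - c s‖ < 1 := fun s =>
    ((P - c).norm_coe_le_norm s).trans_lt hN
  have hP0 : P 0 = c 0 := by simp [hP]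
  have hP1 : P 1 = c 1 := by simp [hP, hN0]
  let H : I × I → E := fun q => c q.2 + (q.1 : ℝ) • (P q.2 - c q.2)
  have hHc : Continuous H := by fun_prop
  have hH0 : ∀ q, H q ≠ 0 := by
    intro q hq
    have h1 : c q.2 = - ((q.1 : ℝ) • (P q.2 - c q.2)) := eq_neg_of_add_eq_zero_left hq
    have h2 := hc q.2
    rw [h1, norm_neg, norm_smul, Real.norm_eq_abs, abs_of_nonneg q.1.2.1] at h2
    nlinarith [hd q.2, q.1.2.1, q.1.2.2, norm_nonneg (P q.2 - c q.2)]
  let K : C(I × I, Sph n) := ⟨fun q => ⟨‖H q‖⁻¹ • H q, by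
      exact mem_sphere_zero_iff_norm.2 (norm_smul_inv_norm (𝕜 := ℝ) (hH0 q))⟩, by
      refine Continuous.subtype_mk ?_ _
      exact (hHc.norm.inv₀ fun q => norm_ne_zero_iff.2 (hH0 q)).smul hHc⟩
  have hHz : ∀ s, H (0, s) = c s := fun s => by simp [H]
  have hHo : ∀ s, H (1, s) = P s := fun s => by simp [H]
  have hHe0 : ∀ t, H (t, 0) = c 0 := fun t => by simp [H, hP0]
  have hHe1 : ∀ t, H (t, 1) = c 1 := fun t => by simp [H, hP1]
  have hK0 : ∀ s, K (0, s) = γ s := fun s => by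
    apply Subtype.ext; simp only [K, ContinuousMap.coe_mk, hHz, hc]; simp [c]
  have hKe0 : ∀ t, K (t, 0) = x := fun t => by
    apply Subtype.ext; simp only [K, ContinuousMap.coe_mk, hHe0, hc]; simp [c]
  have hKe1 : ∀ t, K (t, 1) = x := fun t => by
    apply Subtype.ext; simp only [K, ContinuousMap.coe_mk, hHe1, hc]; simp [c]
  let γ' : Path x x := ⟨⟨fun s => K (1, s), by fun_prop⟩, hKe0 1, hKe1 1⟩
  have hh : Path.Homotopic γ γ' := by
    refine ⟨⟨⟨K, hK0, fun s => rfl⟩, ?_⟩⟩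
    rintro t s (rfl | rfl)
    · simpa using hKe0 t
    · simpa using hKe1 t
  -- find a missed point
  let Q : ℝ → E := fun s => ∑ k : Fin (N + 1),
    ((N.choose k : ℝ) * s ^ (k : ℕ) * (1 - s) ^ (N - k)) • c (bernstein.z k)
  have hQ : ∀ s : I, Q s = P s := fun s => by
    simp [hP, bernsteinApproximation.apply, Q, bernstein_apply]
  have hQd : ContDiff ℝ 1 (fun q : ℝ × ℝ => q.1 • Q q.2) := by
    refine contDiff_fst.smul (ContDiff.sum fun k _ => ?_)
    fun_prop
  have hdense := hQd.dense_compl_range_of_finrank_lt_finrank (by simp [E]; omega)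
  obtain ⟨w, hw⟩ := hdense.nonempty
  have hw' : ∀ a s, a • Q s ≠ w := fun a s h => hw ⟨(a, s), h⟩
  have hw0 : w ≠ 0 := fun h => hw' 0 0 (by simp [h])
  have hwn := norm_ne_zero_iff.2 hw0
  let v : Sph n := ⟨‖w‖⁻¹ • w, mem_sphere_zero_iff_norm.2 (norm_smul_inv_norm (𝕜 := ℝ) hw0)⟩
  refine hh.trans (sph_loop_avoid γ' v ?_)
  intro s hs
  have h1 : ‖P s‖⁻¹ • P s = ‖w‖⁻¹ • w := by
    have := congrArg Subtype.val hs
    simpa [γ', K, hHo, v] using this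
  apply hw' (‖w‖ * ‖P s‖⁻¹) s
  rw [hQ, mul_smul, h1, smul_smul, mul_inv_cancel₀ hwn, one_smul]

lemma sph_pathConnected {n : ℕ} (hn : 2 ≤ n) : PathConnectedSpace (Sph n) := by
  apply isPathConnected_iff_pathConnectedSpace.1
  apply isPathConnected_sphere _ _ zero_le_one
  rw [← Module.finrank_eq_rank]
  simp
  omega

lemma sph_simplyConnected {n : ℕ} (hn : 2 ≤ n) : SimplyConnectedSpace (Sph n) :=
  simply_connected_iff_loops_nullhomotopic.2 ⟨sph_pathConnected hn, fun _ γ => sph_loop_null hn γ⟩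

section hcs
variable {X Y : Type} [TopologicalSpace X] [TopologicalSpace Y]

lemma hcs_joined {F G : C(X, Y)} (p q : HCS F G) (sg : C(I, X)) (K : C(I × I, Y))
    (h0 : ∀ t, K (t, 0) = F (sg t)) (h1 : ∀ t, K (t, 1) = G (sg t))
    (hp : sg 0 = p.1.1) (hq : sg 1 = q.1.1)
    (hp' : ∀ s, K (0, s) = p.1.2 s) (hq' : ∀ s, K (1, s) = q.1.2 s) : Joined p q := by
  refine ⟨⟨⟨fun t => ⟨(sg t, K.curry t), h0 t, h1 t⟩, ?_⟩, ?_, ?_⟩⟩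
  · refine Continuous.subtype_mk ?_ _
    fun_prop
  · exact Subtype.ext (Prod.ext hp (ContinuousMap.ext hp'))
  · exact Subtype.ext (Prod.ext hq (ContinuousMap.ext hq'))

lemma hcs_joined_of_simply [PathConnectedSpace X] [SimplyConnectedSpace Y] {F G : C(X, Y)}
    (p q : HCS F G) : Joined p q := by
  -- same base point case
  have key : ∀ p q : HCS F G, p.1.1 = q.1.1 → Joined p q := by
    intro p q h
    let γ : Path (F p.1.1) (G p.1.1) := ⟨p.1.2, p.2.1, p.2.2⟩
    let δ : Path (F p.1.1) (G p.1.1) := ⟨q.1.2, by rw [h]; exact q.2.1, by rw [h]; exact q.2.2⟩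
    obtain ⟨H⟩ := SimplyConnectedSpace.paths_homotopic γ δ
    refine hcs_joined p q (.const _ p.1.1) H.toContinuousMap ?_ ?_ rfl h ?_ ?_
    · intro t; exact H.source t
    · intro t; exact H.target t
    · intro s; exact H.apply_zero s
    · intro s; exact H.apply_one s
  obtain ⟨sg⟩ := PathConnectedSpace.joined p.1.1 q.1.1
  let A : (t : I) → Path (F (sg t)) (F p.1.1) := fun t =>
    ⟨⟨fun s => F (sg (t * unitInterval.symm s)), by fun_prop⟩, by simp, by simp⟩
  let B : (t : I) → Path (G p.1.1) (G (sg t)) := fun t =>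
    ⟨⟨fun s => G (sg (t * s)), by fun_prop⟩, by simp, by simp⟩
  let γ : Path (F p.1.1) (G p.1.1) := ⟨p.1.2, p.2.1, p.2.2⟩
  have hA : Continuous ↿A := by
    change Continuous fun q : I × I => F (sg (q.1 * unitInterval.symm q.2)); fun_prop
  have hB : Continuous ↿B := by
    change Continuous fun q : I × I => G (sg (q.1 * q.2)); fun_prop
  have hγ : Continuous ↿(fun _ : I => γ) := by
    change Continuous fun q : I × I => γ q.2; fun_prop
  let M : (t : I) → Path (F (sg t)) (G (sg t)) := fun t => ((A t).trans γ).trans (B t)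
  have hM : Continuous ↿M := Path.trans_continuous_family _
    (Path.trans_continuous_family _ hA _ hγ) _ hB
  let e : I → HCS F G := fun t => ⟨(sg t, (M t).toContinuousMap), (M t).source, (M t).target⟩
  have h1 : Joined p (e 0) := key _ _ (by simp [e])
  have h2 : Joined (e 1) q := key _ _ (by simp [e])
  refine (h1.trans ?_).trans h2
  exact hcs_joined (e 0) (e 1) sg.toContinuousMap ⟨↿M, hM⟩ (fun t => (M t).source)
    (fun t => (M t).target) rfl rfl (fun s => rfl) (fun s => rfl)

end hcs

lemma hcs_card {X S : Type} [TopologicalSpace X] [TopologicalSpace S]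
    [SimplyConnectedSpace X] [LocallyPathConnectedSpace X] [SimplyConnectedSpace S]
    (G : Type) [Group G] [MulAction G S]
    (hcov : IsQuotientCoveringMap (Quotient.mk (MulAction.orbitRel G S)) G)
    (f₁ f₂ : C(X, Quotient (MulAction.orbitRel G S))) :
    Nat.card (ZerothHomotopy (HCS f₁ f₂)) = Nat.card G := by
  let π : S → Quotient (MulAction.orbitRel G S) := Quotient.mk _
  have cov : IsCoveringMap π := hcov.isCoveringMap
  have hπc : Continuous π := cov.continuous
  have hcan := hcov.isCancelSMul
  have hG := hcov.toContinuousConstSMul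
  have hx : Nonempty X := inferInstance
  obtain ⟨x₀⟩ := hx
  have lift : ∀ f : C(X, Quotient (MulAction.orbitRel G S)), ∃ F : C(X, S), ∀ x, π (F x) = f x := by
    intro f
    obtain ⟨e₀, he⟩ := hcov.surjective (f x₀)
    obtain ⟨F, ⟨_, hF⟩, _⟩ := cov.existsUnique_continuousMap_lifts f x₀ e₀ he
    exact ⟨F, congr_fun hF⟩
  obtain ⟨F₁, hF₁⟩ := lift f₁
  obtain ⟨F₂, hF₂⟩ := lift f₂
  -- every point of the coincidence space lifts
  have hex : ∀ p : HCS f₁ f₂, ∃ g : G, ∃ Γ : C(I, S), (∀ s, π (Γ s) = p.1.2 s) ∧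
      Γ 0 = F₁ p.1.1 ∧ Γ 1 = g • F₂ p.1.1 := by
    intro p
    obtain ⟨Γ, hΓ, hΓ0⟩ := cov.exists_path_lifts p.1.2 (F₁ p.1.1) (by rw [p.2.1, hF₁])
    have h1 : π (Γ 1) = π (F₂ p.1.1) := by
      rw [hF₂, ← p.2.2]; exact congr_fun hΓ 1
    obtain ⟨g, hg⟩ := hcov.apply_eq_iff_mem_orbit.1 h1
    exact ⟨g, Γ, congr_fun hΓ, hΓ0, hg.symm⟩
  choose φ Γ hΓ hΓ0 hΓ1 using hex
  -- uniqueness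
  have huniq : ∀ (p : HCS f₁ f₂) (g : G) (Δ : C(I, S)), (∀ s, π (Δ s) = p.1.2 s) →
      Δ 0 = F₁ p.1.1 → Δ 1 = g • F₂ p.1.1 → φ p = g := by
    intro p g Δ h h0 h1
    have : (Γ p : I → S) = Δ := cov.eq_of_comp_eq (Γ p).continuous Δ.continuous
      (funext fun s => (hΓ p s).trans (h s).symm) 0 ((hΓ0 p).trans h0.symm)
    have h2 : φ p • F₂ p.1.1 = g • F₂ p.1.1 := by rw [← hΓ1, ← h1, this]
    exact hcan.right_cancel _ _ _ h2
  have hinv : ∀ p q : HCS f₁ f₂, Joined p q → φ p = φ q := by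
    rintro p q ⟨w⟩
    let H : C(I × I, Quotient (MulAction.orbitRel G S)) :=
      ⟨fun z => (w z.2).1.2 z.1, by fun_prop⟩
    let a : C(I, S) := ⟨fun t => F₁ (w t).1.1, by fun_prop⟩
    have H0 : ∀ t, H (0, t) = π (a t) := fun t => by
      simp only [H, a, ContinuousMap.coe_mk, hF₁]; exact (w t).2.1
    let L := cov.liftHomotopy H a H0
    have hL : ∀ z, π (L z) = H z := congr_fun (cov.liftHomotopy_lifts H a H0)
    have hL0 : ∀ t, L (0, t) = a t := cov.liftHomotopy_zero H a H0
    have hpt : L (1, 0) = φ p • F₂ p.1.1 := by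
      obtain ⟨g, hg⟩ : ∃ g : G, g • F₂ p.1.1 = L (1, 0) := by
        refine hcov.apply_eq_iff_mem_orbit.1 ((hL _).trans ?_)
        change _ = π _
        rw [hF₂, ← p.2.2]; simp [H]
      rw [← hg, huniq p g ⟨fun s => L (s, 0), by fun_prop⟩ ?_ ?_ hg.symm]
      · intro s; simp [hL, H]
      · simp [hL0, a]
    have hall : (fun t => L (1, t)) = fun t => φ p • F₂ (w t).1.1 := by
      refine cov.eq_of_comp_eq (by fun_prop) ?_ ?_ 0 ?_
      · exact Continuous.const_smul (by fun_prop) _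
      · funext t
        simp only [Function.comp_apply]
        rw [hL, show π (φ p • F₂ (w t).1.1) = π (F₂ (w t).1.1) from hcov.map_smul _, hF₂]
        exact (w t).2.2
      · simpa using hpt
    symm
    refine huniq q (φ p) ⟨fun s => L (s, 1), by fun_prop⟩ ?_ ?_ ?_
    · intro s; simp [hL, H]
    · simp [hL0, a]
    · simpa using congr_fun hall 1
  -- the class map
  let Φ : ZerothHomotopy (HCS f₁ f₂) → G := Quotient.lift φ hinv
  refine Nat.card_congr (Equiv.ofBijective Φ ⟨?_, ?_⟩)
  · rintro ⟨p⟩ ⟨q⟩ (h : φ p = φ q)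
    apply Quotient.sound
    change Joined p q
    let F₂' : C(X, S) := ⟨fun x => φ p • F₂ x, Continuous.const_smul (by fun_prop) _⟩
    let p' : HCS F₁ F₂' := ⟨(p.1.1, Γ p), hΓ0 p, hΓ1 p⟩
    let q' : HCS F₁ F₂' := ⟨(q.1.1, Γ q), hΓ0 q, by simpa [F₂', h] using hΓ1 q⟩
    obtain ⟨w⟩ := hcs_joined_of_simply p' q'
    refine hcs_joined p q ⟨fun t => (w t).1.1, by fun_prop⟩
      ⟨fun z => π ((w z.1).1.2 z.2), by fun_prop⟩ ?_ ?_ (by simp [p']) (by simp [q']) ?_ ?_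
    · intro t
      have := (w t).2.1
      simp only [ContinuousMap.coe_mk]
      rw [this, hF₁]
    · intro t
      have := (w t).2.2
      simp only [ContinuousMap.coe_mk]
      rw [this, ← hF₂]
      exact hcov.map_smul _
    · intro s; simp [p', hΓ]
    · intro s; simp [q', hΓ]
  · intro g
    obtain ⟨δ⟩ := PathConnectedSpace.joined (F₁ x₀) (g • F₂ x₀)
    let p : HCS f₁ f₂ := ⟨(x₀, ⟨fun s => π (δ s), by fun_prop⟩), by
      simp [hF₁], by
      simp only [ContinuousMap.coe_mk, Path.target]
      rw [← hF₂]; exact hcov.map_smul _⟩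
    exact ⟨Quotient.mk _ p, huniq p g δ.toContinuousMap (fun s => rfl) δ.source δ.target⟩

theorem stmt10 (m n : ℕ) (hm : 2 ≤ m) (hn : 2 ≤ n)
    (G : Type) [Group G] [Finite G] [Nontrivial G] [MulAction G (Sph n)]
    -- the action is by diffeomorphisms:
    (hsmooth : ∀ g : G, ContMDiff (𝓡 n) (𝓡 n) (⊤ : ℕ∞) fun x : Sph n => g • x)
    -- the action is free:
    (hfree : ∀ (g : G) (x : Sph n), g • x = x → g = 1)
    (f₁ f₂ : C(Sph m, Quotient (MulAction.orbitRel G (Sph n)))) :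
    Nat.card (ZerothHomotopy (HCS f₁ f₂)) = Nat.card G := by
  have := sph_simplyConnected hm
  have := sph_simplyConnected hn
  have : LocallyPathConnectedSpace (Sph m) :=
    ChartedSpace.locallyPathConnectedSpace (EuclideanSpace ℝ (Fin m)) (Sph m)
  have : ContinuousConstSMul G (Sph n) := ⟨fun g => (hsmooth g).continuous⟩
  have : IsCancelSMul G (Sph n) := ⟨fun a b c h => by
    have := hfree (b⁻¹ * a) c (by rw [mul_smul, h, inv_smul_smul])
    exact (inv_mul_eq_one.1 this).symm⟩
  exact hcs_card G (isQuotientCoveringMap_quotientMk_of_properlyDiscontinuousSMul) f₁ f₂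
end
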